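/- No map projection preserves the Polsby-Popper ordering: let φ be a homeomorphism from a nonempty open subset U of S² (with the subspace topology) onto an open subset V of EuclideanSpace ℝ (Fin 2). For Ω ⊆ S² define its spherical Polsby-Popper score PP_S(Ω) = 4π·μH²(Ω)/(μH¹(closure(Ω) ∩ closure(S² \ Ω)))², and for Ω′ ⊆ EuclideanSpace ℝ (Fin 2) define its planar Polsby-Popper score PP_pl(Ω′) = 4π·vol(Ω′)/(μH¹(frontier Ω′))², both computed in the extended nonnegative reals ℝ≥0∞. Then there exist nonempty sets A, B ⊆ U, each open in S² with compact closure contained in U and with A ⊆ B, such that PP_S(A) < PP_S(B) but PP_pl(φ '' A) ≥ PP_pl(φ '' B). In particular, φ does not preserve the ordering of regions by Polsby-Popper score. -/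

import Mathlib

open Metric MeasureTheory Real

/-- The spherical Polsby-Popper score of a region `Ω ⊆ S²`: `4π · area / perimeter²`,
where the area is the 2-dimensional Hausdorff measure of `Ω` and the perimeter is the
1-dimensional Hausdorff measure of the boundary of `Ω` relative to the sphere. -/
noncomputable def ppSphere (Ω : Set (EuclideanSpace ℝ (Fin 3))) : ENNReal :=
  ENNReal.ofReal (4 * π) * μH[2] Ω /
    (μH[1] (closure Ω ∩ closure (sphere (0 : EuclideanSpace ℝ (Fin 3)) 1 \ Ω))) ^ 2

/-- The planar Polsby-Popper score of a region `Ω′` in the plane: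
`4π · vol(Ω′) / (μH¹(frontier Ω′))²`. -/
noncomputable def ppPlane (Ω' : Set (EuclideanSpace ℝ (Fin 2))) : ENNReal :=
  ENNReal.ofReal (4 * π) * volume Ω' / (μH[1] (frontier Ω')) ^ 2

/-- The length of a preconnected set is at least the distance of any two of its points. -/
lemma edist_le_hausdorffMeasure_one {X : Type*} [MetricSpace X] [MeasurableSpace X] [BorelSpace X]
    {K : Set X} (hK : IsPreconnected K) {x y : X} (hx : x ∈ K) (hy : y ∈ K) :
    edist x y ≤ μH[1] K := by
  have hL : LipschitzWith 1 (fun z => dist x z) := LipschitzWith.dist_right x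
  have h1 := hL.hausdorffMeasure_image_le (d := 1) zero_le_one K
  have hsub : Set.Icc 0 (dist x y) ⊆ (fun z => dist x z) '' K := by
    have hc : IsPreconnected ((fun z => dist x z) '' K) := hK.image _ (by fun_prop)
    exact hc.Icc_subset ⟨x, hx, dist_self x⟩ ⟨y, hy, rfl⟩
  have h2 := (measure_mono hsub).trans h1
  rw [hausdorffMeasure_real] at h2
  simpa [edist_dist] using h2

lemma hausdorffMeasure_two_eq_zero {X : Type*} [MetricSpace X] [MeasurableSpace X] [BorelSpace X]
    {K : Set X} (hK : μH[1] K ≠ ⊤) : μH[2] K = 0 :=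
  (Measure.hausdorffMeasure_zero_or_top (by norm_num : (1 : ℝ) < 2) K).resolve_right hK

lemma volume_eq_zero_of_hausdorffMeasure_one {K : Set (EuclideanSpace ℝ (Fin 2))}
    (hK : μH[1] K ≠ ⊤) : volume K = 0 := by
  have h := hausdorffMeasure_two_eq_zero hK
  have hL : LipschitzWith 1 (fun x : EuclideanSpace ℝ (Fin 2) => (x : Fin 2 → ℝ)) :=
    PiLp.lipschitzWith_ofLp 2 _
  have h1 := hL.hausdorffMeasure_image_le (d := 2) zero_le_two K
  have h2 : (μH[2] : Measure (Fin 2 → ℝ)) = volume := by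
    simpa using hausdorffMeasure_pi_real (ι := Fin 2)
  rw [h2, h, mul_zero] at h1
  exact measure_mono_null (Set.subset_preimage_image _ K)
    ((PiLp.volume_preserving_ofLp (Fin 2)).quasiMeasurePreserving.preimage_null
      (nonpos_iff_eq_zero.1 h1))

/-- A larger area together with a shorter boundary gives a strictly larger score. -/
lemma score_lt_score {c a b P Q : ENNReal} (hc0 : c ≠ 0) (hc : c ≠ ⊤) (hab : a < b)
    (hQP : Q ≤ P) (hP : P ≠ 0) (hQ : Q ≠ ⊤) : c * a / P ^ 2 < c * b / Q ^ 2 := by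
  have hab' : c * a < c * b := (ENNReal.mul_lt_mul_iff_right hc0 hc).2 hab
  by_cases hPt : P = ⊤
  · have : c * a / P ^ 2 = 0 := by simp [hPt]
    rw [this]
    refine ENNReal.div_pos (ne_bot_of_gt hab') (by finiteness)
  · calc c * a / P ^ 2 < c * b / P ^ 2 := by
          refine ENNReal.div_lt_div_right (by simpa using hP) (by finiteness) hab'
      _ ≤ c * b / Q ^ 2 := by gcongr

/-- The point with coordinates `a`, `y`, `z` in the orthonormal basis `b`. -/
noncomputable def frame (b : OrthonormalBasis (Fin 3) ℝ (EuclideanSpace ℝ (Fin 3))) (a y z : ℝ) :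
    EuclideanSpace ℝ (Fin 3) :=
  b.repr.symm !₂[a, y, z]

section frame

variable (b : OrthonormalBasis (Fin 3) ℝ (EuclideanSpace ℝ (Fin 3)))

lemma exists_orthonormalBasis_zero_eq {q : EuclideanSpace ℝ (Fin 3)} (hq : ‖q‖ = 1) :
    ∃ b : OrthonormalBasis (Fin 3) ℝ (EuclideanSpace ℝ (Fin 3)), b 0 = q := by
  have hv : Orthonormal ℝ (({0} : Set (Fin 3)).domRestrict fun _ => q) := by
    refine ⟨fun _ => by simpa using hq, fun i j hij => absurd (Subsingleton.elim i j) hij⟩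
  obtain ⟨b, hb⟩ := hv.exists_orthonormalBasis_extension_of_card_eq (by simp)
  exact ⟨b, hb 0 rfl⟩

lemma dist_frame (a y z a' y' z' : ℝ) :
    dist (frame b a y z) (frame b a' y' z') = √((a - a') ^ 2 + (y - y') ^ 2 + (z - z') ^ 2) := by
  rw [frame, frame, b.repr.symm.dist_map, EuclideanSpace.dist_eq]
  simp [Fin.sum_univ_three, Real.dist_eq, sq_abs]

lemma norm_frame (a y z : ℝ) : ‖frame b a y z‖ = √(a ^ 2 + y ^ 2 + z ^ 2) := by
  rw [frame, b.repr.symm.norm_map, EuclideanSpace.norm_eq]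
  simp [Fin.sum_univ_three, sq_abs]

lemma frame_repr (x : EuclideanSpace ℝ (Fin 3)) :
    frame b (b.repr x 0) (b.repr x 1) (b.repr x 2) = x := by
  rw [frame, LinearIsometryEquiv.symm_apply_eq]
  ext i
  fin_cases i <;> rfl

lemma repr_frame (a y z : ℝ) : b.repr (frame b a y z) = !₂[a, y, z] := by
  simp [frame]

lemma inner_zero_frame (a y z : ℝ) : inner ℝ (b 0) (frame b a y z) = a := by
  rw [← b.repr_apply_apply, repr_frame]
  rfl

lemma frame_one_zero_zero : frame b 1 0 0 = b 0 := by
  rw [frame, LinearIsometryEquiv.symm_apply_eq]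
  ext i
  fin_cases i <;> simp

lemma contDiff_frame {n : WithTop ℕ∞} {E : Type*} [NormedAddCommGroup E] [NormedSpace ℝ E]
    {f g h : E → ℝ} (hf : ContDiff ℝ n f) (hg : ContDiff ℝ n g) (hh : ContDiff ℝ n h) :
    ContDiff ℝ n fun x => frame b (f x) (g x) (h x) := by
  refine b.repr.symm.contDiff.comp ?_
  rw [contDiff_euclidean]
  intro i
  fin_cases i <;> simpa

lemma continuous_frame : Continuous fun p : ℝ × ℝ × ℝ => frame b p.1 p.2.1 p.2.2 :=
  (contDiff_frame (n := 0) b (by fun_prop) (by fun_prop) (by fun_prop)).continuous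

lemma repr_sq_add_sq_add_sq (x : EuclideanSpace ℝ (Fin 3)) :
    b.repr x 0 ^ 2 + b.repr x 1 ^ 2 + b.repr x 2 ^ 2 = ‖x‖ ^ 2 := by
  rw [← b.repr.norm_map, EuclideanSpace.norm_sq_eq]
  simp [Fin.sum_univ_three]

end frame

lemma exists_angle {y z ρ : ℝ} (hρ : 0 ≤ ρ) (h : y ^ 2 + z ^ 2 = ρ ^ 2) :
    ∃ θ ∈ Set.Icc (-π) π, y = ρ * cos θ ∧ z = ρ * sin θ := by
  have hn : ‖(⟨y, z⟩ : ℂ)‖ = ρ := by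
    rw [Complex.norm_def, Complex.normSq_mk, ← pow_two, ← pow_two, h, Real.sqrt_sq hρ]
  refine ⟨Complex.arg ⟨y, z⟩, ⟨(Complex.neg_pi_lt_arg _).le, Complex.arg_le_pi _⟩, ?_, ?_⟩
  · rw [← hn, Complex.norm_mul_cos_arg]
  · rw [← hn, Complex.norm_mul_sin_arg]

lemma hausdorffMeasure_image_ne_top {E F : Type*} [NormedAddCommGroup E] [NormedSpace ℝ E]
    [MeasurableSpace E] [BorelSpace E]
    [NormedAddCommGroup F] [NormedSpace ℝ F] [MeasurableSpace F] [BorelSpace F]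
    {f : E → F} (hf : ContDiff ℝ 1 f) {s : Set E} (hs : IsCompact s) {d : ℝ} (hd : 0 ≤ d)
    (hsd : μH[d] s ≠ ⊤) : μH[d] (f '' s) ≠ ⊤ := by
  obtain ⟨C, hC⟩ := (LocallyLipschitz.locallyLipschitzOn (s := s)
    hf.locallyLipschitz).exists_lipschitzOnWith_of_compact
    hs
  refine ne_top_of_le_ne_top ?_ (hC.hausdorffMeasure_image_le hd)
  finiteness

/-- The circle of the unit sphere at height `h` over the plane orthogonal to `o`. -/
def circ (o : EuclideanSpace ℝ (Fin 3)) (h : ℝ) : Set (EuclideanSpace ℝ (Fin 3)) :=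
  {x ∈ sphere 0 1 | inner ℝ o x = h}

lemma isCompact_circ (o : EuclideanSpace ℝ (Fin 3)) (h : ℝ) : IsCompact (circ o h) :=
  (isCompact_sphere _ _).inter_right (isClosed_eq (by fun_prop) continuous_const)

lemma circ_eq_image (b : OrthonormalBasis (Fin 3) ℝ (EuclideanSpace ℝ (Fin 3))) {h : ℝ}
    (hh : h ^ 2 ≤ 1) : circ (b 0) h =
      (fun θ => frame b h (√(1 - h ^ 2) * cos θ) (√(1 - h ^ 2) * sin θ)) '' Set.Icc (-π) π := by
  have hs : √(1 - h ^ 2) ^ 2 = 1 - h ^ 2 := Real.sq_sqrt (by linarith)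
  ext x
  constructor
  · rintro ⟨hx, hxh⟩
    rw [← b.repr_apply_apply] at hxh
    have h1 := repr_sq_add_sq_add_sq b x
    rw [mem_sphere_zero_iff_norm.1 hx, hxh] at h1
    obtain ⟨θ, hθ, hy, hz⟩ := exists_angle (y := b.repr x 1) (z := b.repr x 2)
      (Real.sqrt_nonneg (1 - h ^ 2)) (by linarith)
    refine ⟨θ, hθ, ?_⟩
    simp only
    rw [← hy, ← hz, ← hxh, frame_repr]
  · rintro ⟨θ, hθ, rfl⟩
    refine ⟨?_, inner_zero_frame ..⟩
    rw [mem_sphere_zero_iff_norm, norm_frame, mul_pow, mul_pow, hs]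
    rw [show h ^ 2 + (1 - h ^ 2) * cos θ ^ 2 + (1 - h ^ 2) * sin θ ^ 2 = 1 by
      linear_combination (1 - h ^ 2) * sin_sq_add_cos_sq θ, Real.sqrt_one]

lemma hausdorffMeasure_circ_ne_top {o : EuclideanSpace ℝ (Fin 3)} (ho : ‖o‖ = 1) {h : ℝ}
    (hh : h ^ 2 ≤ 1) : μH[1] (circ o h) ≠ ⊤ := by
  obtain ⟨b, rfl⟩ := exists_orthonormalBasis_zero_eq ho
  rw [circ_eq_image b hh]
  refine hausdorffMeasure_image_ne_top (contDiff_frame b (by fun_prop) (by fun_prop) (by fun_prop))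
    isCompact_Icc zero_le_one ?_
  simp [hausdorffMeasure_real]

lemma isPreconnected_circ {o : EuclideanSpace ℝ (Fin 3)} (ho : ‖o‖ = 1) {h : ℝ}
    (hh : h ^ 2 ≤ 1) : IsPreconnected (circ o h) := by
  obtain ⟨b, rfl⟩ := exists_orthonormalBasis_zero_eq ho
  rw [circ_eq_image b hh]
  exact isPreconnected_Icc.image _ (contDiff_frame (n := 0) b (by fun_prop) (by fun_prop)
    (by fun_prop)).continuous.continuousOn

/-- Two opposite points on the circle at height `h`. -/
lemma exists_opposite_points {o : EuclideanSpace ℝ (Fin 3)} (ho : ‖o‖ = 1) :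
    ∃ P Q : ℝ → EuclideanSpace ℝ (Fin 3), Continuous P ∧ Continuous Q ∧
      ∀ h : ℝ, h ^ 2 < 1 → P h ∈ circ o h ∧ Q h ∈ circ o h ∧ P h ≠ Q h := by
  obtain ⟨b, rfl⟩ := exists_orthonormalBasis_zero_eq ho
  refine ⟨fun h => frame b h (√(1 - h ^ 2)) 0, fun h => frame b h (-√(1 - h ^ 2)) 0,
    (continuous_frame b).comp (by fun_prop : Continuous fun h : ℝ => (h, √(1 - h ^ 2), (0 : ℝ))),
    (continuous_frame b).comp (by fun_prop : Continuous fun h : ℝ => (h, -√(1 - h ^ 2), (0 : ℝ))),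
    fun h hh => ?_⟩
  have hs : √(1 - h ^ 2) ^ 2 = 1 - h ^ 2 := Real.sq_sqrt (by linarith)
  have hpos : 0 < √(1 - h ^ 2) := Real.sqrt_pos.2 (by linarith)
  refine ⟨⟨?_, inner_zero_frame ..⟩, ⟨?_, inner_zero_frame ..⟩, fun he => ?_⟩
  · rw [mem_sphere_zero_iff_norm, norm_frame, hs]; simp
  · rw [mem_sphere_zero_iff_norm, norm_frame, neg_sq, hs]; simp
  · have := congrArg (fun x => b.repr x 1) he
    simp only [repr_frame] at this
    simp at this
    linarith

lemma hausdorffMeasure_circ_pos {o : EuclideanSpace ℝ (Fin 3)} (ho : ‖o‖ = 1) {h : ℝ}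
    (hh : h ^ 2 < 1) : 0 < μH[1] (circ o h) := by
  obtain ⟨P, Q, -, -, hPQ⟩ := exists_opposite_points ho
  obtain ⟨hP, hQ, hne⟩ := hPQ h hh
  exact (edist_pos.2 hne).trans_le
    (edist_le_hausdorffMeasure_one (isPreconnected_circ ho hh.le) hP hQ)

lemma hausdorffMeasure_sphere_ne_top :
    μH[2] (sphere (0 : EuclideanSpace ℝ (Fin 3)) 1) ≠ ⊤ := by
  obtain ⟨b, -⟩ := exists_orthonormalBasis_zero_eq (q := EuclideanSpace.single 0 1) (by simp)
  have hsub : sphere (0 : EuclideanSpace ℝ (Fin 3)) 1 ⊆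
      (fun p : ℝ × ℝ => frame b (cos p.1) (sin p.1 * cos p.2) (sin p.1 * sin p.2)) ''
        (Set.Icc 0 π ×ˢ Set.Icc (-π) π) := by
    intro x hx
    have h1 := repr_sq_add_sq_add_sq b x
    rw [mem_sphere_zero_iff_norm.1 hx] at h1
    have hle : -1 ≤ b.repr x 0 ∧ b.repr x 0 ≤ 1 := by
      constructor <;> nlinarith [sq_nonneg (b.repr x 1), sq_nonneg (b.repr x 2)]
    have hc := Real.cos_arccos hle.1 hle.2
    have hs := Real.sin_arccos (b.repr x 0)
    obtain ⟨θ, hθ, hy, hz⟩ := exists_angle (y := b.repr x 1) (z := b.repr x 2)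
      (Real.sqrt_nonneg (1 - b.repr x 0 ^ 2))
      (by rw [Real.sq_sqrt (by nlinarith)]; linarith)
    refine ⟨(arccos (b.repr x 0), θ), ⟨⟨Real.arccos_nonneg _, Real.arccos_le_pi _⟩, hθ⟩, ?_⟩
    simp only
    rw [hc, hs, ← hy, ← hz, frame_repr]
  refine ne_top_of_le_ne_top ?_ (measure_mono hsub)
  refine hausdorffMeasure_image_ne_top (contDiff_frame b (by fun_prop) (by fun_prop) (by fun_prop))
    (isCompact_Icc.prod isCompact_Icc) zero_le_two ?_
  rw [hausdorffMeasure_prod_real]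
  exact (isCompact_Icc.prod isCompact_Icc).measure_ne_top

lemma hausdorffMeasure_sphere_inter_pos {G : Set (EuclideanSpace ℝ (Fin 3))} (hG : IsOpen G)
    (hne : (sphere 0 1 ∩ G).Nonempty) : 0 < μH[2] (sphere 0 1 ∩ G) := by
  obtain ⟨q, hq, hqG⟩ := hne
  obtain ⟨b, rfl⟩ := exists_orthonormalBasis_zero_eq (mem_sphere_zero_iff_norm.1 hq)
  let g : ℝ × ℝ → EuclideanSpace ℝ (Fin 3) := fun p => frame b √(1 - p.1 ^ 2 - p.2 ^ 2) p.1 p.2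
  have hg : Continuous g := (continuous_frame b).comp
    (by fun_prop : Continuous fun p : ℝ × ℝ => (√(1 - p.1 ^ 2 - p.2 ^ 2), p.1, p.2))
  let pr : EuclideanSpace ℝ (Fin 3) → ℝ × ℝ := fun x => (b.repr x 1, b.repr x 2)
  have hpr : LipschitzWith 1 pr := by
    refine LipschitzWith.of_dist_le_mul fun x y => ?_
    rw [NNReal.coe_one, one_mul, Prod.dist_eq, ← b.repr.dist_map x y]
    rw [dist_eq_norm (b.repr x)]
    exact max_le (PiLp.norm_apply_le (b.repr x - b.repr y) 1)
      (PiLp.norm_apply_le (b.repr x - b.repr y) 2)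
  let O : Set (ℝ × ℝ) := g ⁻¹' G ∩ {p | p.1 ^ 2 + p.2 ^ 2 < 1}
  have hO : IsOpen O := (hG.preimage hg).inter (isOpen_lt (by fun_prop) continuous_const)
  have hO0 : (0, 0) ∈ O := by
    refine ⟨?_, by simp⟩
    simpa [g, frame_one_zero_zero] using hqG
  have hsub : O ⊆ pr '' (sphere 0 1 ∩ G) := by
    rintro p ⟨hpG, hp⟩
    refine ⟨g p, ⟨?_, hpG⟩, ?_⟩
    · have hp' : p.1 ^ 2 + p.2 ^ 2 < 1 := hp
      rw [mem_sphere_zero_iff_norm, norm_frame, Real.sq_sqrt (by linarith)]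
      rw [Real.sqrt_eq_one]
      ring
    · simp [pr, g, repr_frame]
  have h1 := (measure_mono hsub).trans (hpr.hausdorffMeasure_image_le (d := 2) zero_le_two _)
  have h2 : 0 < volume O := hO.measure_pos _ ⟨_, hO0⟩
  rw [hausdorffMeasure_prod_real] at h1
  simpa using h2.trans_le h1

lemma hausdorffMeasure_sphere_plane_le (x : EuclideanSpace ℝ (Fin 2)) {r : ℝ} (hr : 0 ≤ r) :
    μH[1] (sphere x r) ≤ ENNReal.ofReal r * ENNReal.ofReal (2 * π) := by
  let f : ℝ → EuclideanSpace ℝ (Fin 2) := fun θ => x + !₂[r * cos θ, r * sin θ]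
  have hf : LipschitzWith r.toNNReal f := by
    refine LipschitzWith.of_dist_le_mul fun s t => ?_
    rw [Real.coe_toNNReal _ hr, dist_add_left, EuclideanSpace.dist_eq]
    refine Real.sqrt_le_iff.2 ⟨by positivity, ?_⟩
    simp only [Fin.sum_univ_two, Real.dist_eq, sq_abs]
    have h1 := Real.one_sub_sq_div_two_le_cos (x := s - t)
    rw [Real.cos_sub] at h1
    rw [mul_pow, sq_abs]
    simp only [Matrix.cons_val_zero, Matrix.cons_val_one]
    have h2 : (r * cos s - r * cos t) ^ 2 + (r * sin s - r * sin t) ^ 2 =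
        r ^ 2 * (2 - 2 * (cos s * cos t + sin s * sin t)) := by
      linear_combination r ^ 2 * (sin_sq_add_cos_sq s + sin_sq_add_cos_sq t)
    rw [h2]
    exact mul_le_mul_of_nonneg_left (by linarith) (sq_nonneg r)
  have hsub : sphere x r ⊆ f '' Set.Icc (-π) π := by
    intro y hy
    have hy' : ‖y - x‖ = r := by rwa [mem_sphere, dist_eq_norm] at hy
    have h1 : (y - x) 0 ^ 2 + (y - x) 1 ^ 2 = r ^ 2 := by
      rw [← hy', EuclideanSpace.norm_sq_eq]
      simp [Fin.sum_univ_two]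
    obtain ⟨θ, hθ, h0, h1⟩ := exists_angle hr h1
    refine ⟨θ, hθ, ?_⟩
    have : !₂[r * cos θ, r * sin θ] = y - x := by
      ext i
      fin_cases i
      · exact h0.symm
      · exact h1.symm
    simp only [f, this]
    abel
  refine (measure_mono hsub).trans ((hf.hausdorffMeasure_image_le zero_le_one _).trans ?_)
  rw [hausdorffMeasure_real, Real.volume_Icc, ENNReal.rpow_one, sub_neg_eq_add, ← two_mul]
  rfl

/-- A compact planar set of finite length has compact neighbourhoods of arbitrarily small area
whose boundary has a length controlled by that of the set. -/
lemma exists_thin_neighborhood {T O : Set (EuclideanSpace ℝ (Fin 2))} (hT : IsCompact T)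
    (hT1 : μH[1] T ≠ ⊤) (hO : IsOpen O) (hTO : T ⊆ O) {ε : ENNReal} (hε : ε ≠ 0) :
    ∃ N, IsCompact N ∧ T ⊆ interior N ∧ N ⊆ O ∧
      μH[1] (frontier N) ≤ (μH[1] T + 2) * ENNReal.ofReal (2 * π) ∧ volume N ≤ ε := by
  obtain ⟨δ₀, hδ₀, hthick⟩ := hT.exists_cthickening_subset_open hO hTO
  obtain ⟨n₀, hn₀, hn₀ε⟩ := ENNReal.exists_nnreal_pos_mul_lt
    (a := (μH[1] T + 2) * ENNReal.ofReal π) (by finiteness) hε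
  obtain ⟨δ, hδ, hδ1, hδδ₀, hδn⟩ : ∃ δ : ℝ, 0 < δ ∧ δ ≤ 1 ∧ 2 * δ ≤ δ₀ ∧ 2 * δ ≤ n₀ := by
    refine ⟨min 1 (min (δ₀ / 2) (n₀ / 2)), by positivity, min_le_left _ _, ?_, ?_⟩
    · linarith [(min_le_right 1 (min (δ₀ / 2) (n₀ / 2 : ℝ))).trans (min_le_left _ _)]
    · linarith [(min_le_right 1 (min (δ₀ / 2) (n₀ / 2 : ℝ))).trans (min_le_right _ _)]
  have hinf : (⨅ (t : ℕ → Set (EuclideanSpace ℝ (Fin 2))) (_ : T ⊆ ⋃ n, t n)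
      (_ : ∀ n, ediam (t n) ≤ ENNReal.ofReal δ),
        ∑' n, ⨆ _ : (t n).Nonempty, ediam (t n) ^ (1 : ℝ)) < μH[1] T + 1 := by
    refine lt_of_le_of_lt ?_ (ENNReal.lt_add_right hT1 one_ne_zero)
    rw [Measure.hausdorffMeasure_apply]
    exact le_iSup₂_of_le (ENNReal.ofReal δ) (by simpa using hδ) le_rfl
  simp only [iInf_lt_iff] at hinf
  obtain ⟨t, hTt, htδ, hsum⟩ := hinf
  let I : Set ℕ := {n | (t n ∩ T).Nonempty}
  have hx : ∀ n, ∃ x, n ∈ I → x ∈ t n ∩ T := fun n => by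
    by_cases hn : n ∈ I
    · exact ⟨hn.some, fun _ => hn.some_mem⟩
    · exact ⟨0, fun h => absurd h hn⟩
  choose x hx using hx
  let r : ℕ → ℝ := fun n => (ediam (t n)).toReal + δ / 2 / 2 ^ n
  have hfin : ∀ n, ediam (t n) ≠ ⊤ := fun n => ne_top_of_le_ne_top (by finiteness) (htδ n)
  have hdiam : ∀ n, (ediam (t n)).toReal ≤ δ := fun n =>
    ENNReal.toReal_le_of_le_ofReal hδ.le (htδ n)
  have hr : ∀ n, 0 < r n := fun n => by positivity
  have hrδ : ∀ n, r n ≤ 2 * δ := fun n => by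
    have : δ / 2 / 2 ^ n ≤ δ / 2 := div_le_self (by positivity) (one_le_pow₀ one_le_two)
    linarith [hdiam n]
  obtain ⟨F, hFI, hFfin, hTF⟩ := hT.elim_finite_subcover_image (b := I)
    (c := fun n => ball (x n) (r n)) (fun n _ => isOpen_ball) (by
      intro y hy
      obtain ⟨n, hn⟩ := Set.mem_iUnion.1 (hTt hy)
      have hnI : n ∈ I := ⟨y, hn, hy⟩
      refine Set.mem_biUnion hnI ?_
      have h1 : dist y (x n) ≤ (ediam (t n)).toReal := by
        rw [dist_edist]
        exact ENNReal.toReal_mono (hfin n) (edist_le_ediam_of_mem hn (hx n hnI).1)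
      have h2 : 0 < δ / 2 / 2 ^ n := by positivity
      rw [mem_ball]
      linarith)
  lift F to Finset ℕ using hFfin
  have hrsum : ∑ n ∈ F, ENNReal.ofReal (r n) ≤ μH[1] T + 2 := by
    calc ∑ n ∈ F, ENNReal.ofReal (r n)
        = ∑ n ∈ F, ediam (t n) + ∑ n ∈ F, ENNReal.ofReal (δ / 2 / 2 ^ n) := by
          rw [← Finset.sum_add_distrib]
          refine Finset.sum_congr rfl fun n _ => ?_
          rw [ENNReal.ofReal_add ENNReal.toReal_nonneg (by positivity),
            ENNReal.ofReal_toReal (hfin n)]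
      _ ≤ (μH[1] T + 1) + 1 := by
          refine add_le_add ?_ ?_
          · refine le_trans ?_ hsum.le
            refine le_trans (Finset.sum_le_sum fun n hn => ?_) (ENNReal.sum_le_tsum F)
            have : (t n).Nonempty := (hFI hn).mono Set.inter_subset_left
            simp [this]
          · rw [← ENNReal.ofReal_sum_of_nonneg (fun n _ => by positivity)]
            refine ENNReal.ofReal_le_one.2 (le_trans ?_ hδ1)
            have h := (hasSum_geometric_two' δ)
            exact sum_le_hasSum F (fun n _ => by positivity) h
      _ = μH[1] T + 2 := by rw [add_assoc, one_add_one_eq_two]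
  have hNc : IsCompact (⋃ n ∈ F, closedBall (x n) (r n)) :=
    F.isCompact_biUnion fun n _ => isCompact_closedBall _ _
  have hball : (⋃ n ∈ F, ball (x n) (r n)) ⊆ interior (⋃ n ∈ F, closedBall (x n) (r n)) :=
    interior_maximal (Set.iUnion₂_mono fun n _ => ball_subset_closedBall)
      (isOpen_biUnion fun n _ => isOpen_ball)
  refine ⟨⋃ n ∈ F, closedBall (x n) (r n), hNc, ?_, ?_, ?_, ?_⟩
  · exact Set.Subset.trans (by simpa using hTF) hball
  · refine Set.iUnion₂_subset fun n hn => Set.Subset.trans ?_ hthick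
    refine Set.Subset.trans ?_ (cthickening_mono ((hrδ n).trans hδδ₀) T)
    exact closedBall_subset_cthickening (hx n (hFI hn)).2 _
  · have hfr : frontier (⋃ n ∈ F, closedBall (x n) (r n)) ⊆ ⋃ n ∈ F, sphere (x n) (r n) := by
      rw [hNc.isClosed.frontier_eq]
      rintro y ⟨hy, hy'⟩
      obtain ⟨n, hn, hyn⟩ := Set.mem_iUnion₂.1 hy
      refine Set.mem_iUnion₂.2 ⟨n, hn, le_antisymm hyn (not_lt.1 fun hlt => hy' ?_)⟩
      exact hball (Set.mem_iUnion₂.2 ⟨n, hn, hlt⟩)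
    refine (measure_mono hfr).trans ((measure_biUnion_finset_le _ _).trans ?_)
    refine (Finset.sum_le_sum fun n _ => hausdorffMeasure_sphere_plane_le (x n) (hr n).le).trans ?_
    rw [← Finset.sum_mul]
    gcongr
  · refine (measure_biUnion_finset_le _ _).trans (le_trans ?_ hn₀ε.le)
    have : ∀ n ∈ F, volume (closedBall (x n) (r n)) ≤
        ENNReal.ofReal (r n) * (n₀ * ENNReal.ofReal π) := fun n _ => by
      rw [EuclideanSpace.volume_closedBall_fin_two, pow_two, mul_assoc]
      gcongr
      rw [← ENNReal.ofReal_coe_nnreal]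
      exact ENNReal.ofReal_le_ofReal ((hrδ n).trans hδn)
    refine (Finset.sum_le_sum this).trans ?_
    rw [← Finset.sum_mul]
    calc _ ≤ (μH[1] T + 2) * (n₀ * ENNReal.ofReal π) := by gcongr
      _ = _ := by ring

/-- A linear isometry moving one pair of unit vectors to another pair at the same distance. -/
lemma exists_linearIsometryEquiv {u v x y : EuclideanSpace ℝ (Fin 3)} (hu : ‖u‖ = 1) (hv : ‖v‖ = 1)
    (hx : ‖x‖ = 1) (hy : ‖y‖ = 1) (h : dist u v = dist x y) :
    ∃ e : EuclideanSpace ℝ (Fin 3) ≃ₗᵢ[ℝ] EuclideanSpace ℝ (Fin 3), e u = x ∧ e v = y := by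
  let s := Submodule.reflection (ℝ ∙ (u - x))ᗮ
  have hs : s u = x := Submodule.reflection_sub (hu.trans hx.symm)
  have hsv : ‖s v‖ = ‖y‖ := by rw [s.norm_map, hv, hy]
  let s' := Submodule.reflection (ℝ ∙ (s v - y))ᗮ
  have hs' : s' (s v) = y := Submodule.reflection_sub hsv
  refine ⟨s.trans s', ?_, hs'⟩
  rw [LinearIsometryEquiv.trans_apply, hs]
  refine Submodule.reflection_mem_subspace_eq_self ?_
  rw [Submodule.mem_orthogonal_singleton_iff_inner_right]
  have h1 : dist x (s v) = dist x y := by rw [← h, ← hs, s.dist_map]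
  rw [dist_eq_norm, dist_eq_norm] at h1
  have h2 := norm_sub_sq_real x (s v)
  have h3 := norm_sub_sq_real x y
  rw [h1, hsv] at h2
  rw [inner_sub_left, real_inner_comm, real_inner_comm x y]
  linarith

/-- In the plane, a regular hexagon has side length equal to its circumradius; it suffices to know
an inscribed equilateral triangle and one more vertex on the perpendicular bisector of a side. -/
lemma hexagon_side {a b c d o : EuclideanSpace ℝ (Fin 2)} {R : ℝ} (ha : dist a o = R)
    (hb : dist b o = R) (hc : dist c o = R) (hd : dist d o = R) (h1 : dist a b = dist b c)
    (h2 : dist b c = dist c a) (h3 : dist a d = dist d b) (hab : a ≠ b) (hdc : d ≠ c) :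
    dist a d = R := by
  have hR : 0 ≤ R := ha ▸ dist_nonneg
  have key : ∀ x y : EuclideanSpace ℝ (Fin 2),
      dist x y ^ 2 = (x 0 - y 0) ^ 2 + (x 1 - y 1) ^ 2 := fun x y => by
    rw [EuclideanSpace.dist_eq, Real.sq_sqrt (by positivity)]
    simp [Fin.sum_univ_two, Real.dist_eq]
  have eq_of : ∀ x y : EuclideanSpace ℝ (Fin 2),
      (x 0 - y 0) ^ 2 + (x 1 - y 1) ^ 2 = 0 → x = y := fun x y h => by
    rw [← key] at h
    exact dist_eq_zero.1 (pow_eq_zero_iff two_ne_zero |>.1 h)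
  have ka := key a o
  have kb := key b o
  have kc := key c o
  have kd := key d o
  have k1 := congrArg (· ^ 2) h1
  have k2 := congrArg (· ^ 2) h2
  have k3 := congrArg (· ^ 2) h3
  simp only [key] at k1 k2 k3
  rw [ha] at ka
  rw [hb] at kb
  rw [hc] at kc
  rw [hd] at kd
  have nab := fun h => hab (eq_of a b h)
  have ndc := fun h => hdc (eq_of d c h)
  rw [← pow_left_inj₀ dist_nonneg hR two_ne_zero, key]
  clear key eq_of h1 h2 h3 ha hb hc hd
  generalize a 0 = a0 at *
  generalize a 1 = a1 at *
  generalize b 0 = b0 at *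
  generalize b 1 = b1 at *
  generalize c 0 = c0 at *
  generalize c 1 = c1 at *
  generalize d 0 = d0 at *
  generalize d 1 = d1 at *
  generalize o 0 = o0 at *
  generalize o 1 = o1 at *
  obtain ⟨x0, rfl⟩ : ∃ x, a0 = x + o0 := ⟨a0 - o0, by ring⟩
  obtain ⟨x1, rfl⟩ : ∃ x, a1 = x + o1 := ⟨a1 - o1, by ring⟩
  obtain ⟨y0, rfl⟩ : ∃ x, b0 = x + o0 := ⟨b0 - o0, by ring⟩
  obtain ⟨y1, rfl⟩ : ∃ x, b1 = x + o1 := ⟨b1 - o1, by ring⟩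
  obtain ⟨z0, rfl⟩ : ∃ x, c0 = x + o0 := ⟨c0 - o0, by ring⟩
  obtain ⟨z1, rfl⟩ : ∃ x, c1 = x + o1 := ⟨c1 - o1, by ring⟩
  obtain ⟨w0, rfl⟩ : ∃ x, d0 = x + o0 := ⟨d0 - o0, by ring⟩
  obtain ⟨w1, rfl⟩ : ∃ x, d1 = x + o1 := ⟨d1 - o1, by ring⟩
  simp only [add_sub_cancel_right, add_sub_add_right_eq_sub] at *
  obtain ⟨m, hm⟩ : ∃ m, m = x0 * y0 + x1 * y1 := ⟨_, rfl⟩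
  have hyz : y0 * z0 + y1 * z1 = m := by linear_combination (ka - kc + k1) / 2 - hm
  have hzx : z0 * x0 + z1 * x1 = m := by linear_combination (kb - ka + k2) / 2 + hyz
  have hwy : w0 * x0 + w1 * x1 = w0 * y0 + w1 * y1 := by linear_combination (kb - ka - k3) / 2
  have hgram : (R ^ 2 - m) ^ 2 * (R ^ 2 + 2 * m) = 0 := by
    have h : (x0 ^ 2 + x1 ^ 2) * (y0 ^ 2 + y1 ^ 2) * (z0 ^ 2 + z1 ^ 2)
        + 2 * (x0 * y0 + x1 * y1) * (y0 * z0 + y1 * z1) * (z0 * x0 + z1 * x1)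
        - (x0 ^ 2 + x1 ^ 2) * (y0 * z0 + y1 * z1) ^ 2
        - (y0 ^ 2 + y1 ^ 2) * (z0 * x0 + z1 * x1) ^ 2
        - (z0 ^ 2 + z1 ^ 2) * (x0 * y0 + x1 * y1) ^ 2 = 0 := by ring
    rw [← ka, ← kb, ← kc, hyz, hzx, ← hm] at h
    linear_combination h
  have hRm : R ^ 2 - m ≠ 0 := fun h => nab (by linear_combination 2 * h - ka - kb + 2 * hm)
  have hm2 : R ^ 2 + 2 * m = 0 := by simpa [hRm] using hgram
  have hpar : z0 * w1 - z1 * w0 = 0 := by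
    have h0 : (z0 * w1 - z1 * w0) * (x0 - y0) = 0 := by
      linear_combination w1 * (hzx - hyz) - z1 * hwy
    have h1 : (z0 * w1 - z1 * w0) * (x1 - y1) = 0 := by
      linear_combination z0 * hwy - w0 * (hzx - hyz)
    by_contra hne
    refine nab ?_
    rw [(mul_eq_zero.1 h0).resolve_left hne, (mul_eq_zero.1 h1).resolve_left hne]
    ring
  have hprod : (z0 * w0 + z1 * w1 - R ^ 2) * (z0 * w0 + z1 * w1 + R ^ 2) = 0 := by
    linear_combination (-(z0 * w1 - z1 * w0)) * hpar - (z0 ^ 2 + z1 ^ 2) * kd - R ^ 2 * kc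
  have hzw : z0 * w0 + z1 * w1 + R ^ 2 = 0 := by
    refine (mul_eq_zero.1 hprod).resolve_left fun h => ndc ?_
    linear_combination -kd - kc - 2 * h
  have hsq : (w0 + z0) ^ 2 + (w1 + z1) ^ 2 = 0 := by linear_combination 2 * hzw - kd - kc
  have hw0 : w0 = -z0 := by nlinarith [sq_nonneg (w0 + z0), sq_nonneg (w1 + z1)]
  have hw1 : w1 = -z1 := by nlinarith [sq_nonneg (w0 + z0), sq_nonneg (w1 + z1)]
  rw [hw0, hw1]
  linear_combination -ka - kc + 2 * hzx + hm2

/-- A larger area together with a strictly shorter boundary gives a strictly larger score. -/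
lemma score_lt_score_of_perimeter_lt {c a b P Q : ENNReal} (hc0 : c ≠ 0) (hc : c ≠ ⊤) (hab : a ≤ b)
    (hb0 : b ≠ 0) (hb : b ≠ ⊤) (hQP : Q < P) : c * a / P ^ 2 < c * b / Q ^ 2 := by
  calc c * a / P ^ 2 ≤ c * b / P ^ 2 := by gcongr
    _ < c * b / Q ^ 2 := by
      refine ENNReal.div_lt_div_left (mul_ne_zero hc0 hb0) (by finiteness) ?_
      exact ENNReal.pow_lt_pow_left two_ne_zero hQP

/-- A homeomorphism `φ` with inverse `ψ` from a relatively open subset `U` of the unit sphere onto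
an open subset of the plane. -/
structure IsMapProjection (U : Set (EuclideanSpace ℝ (Fin 3)))
    (φ : EuclideanSpace ℝ (Fin 3) → EuclideanSpace ℝ (Fin 2))
    (ψ : EuclideanSpace ℝ (Fin 2) → EuclideanSpace ℝ (Fin 3)) : Prop where
  isOpen_rel : ∃ G : Set (EuclideanSpace ℝ (Fin 3)), IsOpen G ∧ U = sphere 0 1 ∩ G
  isOpen_image : IsOpen (φ '' U)
  continuousOn : ContinuousOn φ U
  continuousOn_symm : ContinuousOn ψ (φ '' U)
  left_inv : ∀ p ∈ U, ψ (φ p) = p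

/-- A nonempty relatively open subset of the sphere whose closure lies in `U`. -/
structure IsRegion (U A : Set (EuclideanSpace ℝ (Fin 3))) : Prop where
  nonempty : A.Nonempty
  isOpen_rel : ∃ G : Set (EuclideanSpace ℝ (Fin 3)), IsOpen G ∧ A = sphere 0 1 ∩ G
  closure_subset : closure A ⊆ U

/-- `φ` preserves strict comparisons of Polsby-Popper scores of nested regions. -/
def OrderPreserving (U : Set (EuclideanSpace ℝ (Fin 3)))
    (φ : EuclideanSpace ℝ (Fin 3) → EuclideanSpace ℝ (Fin 2)) : Prop :=
  ∀ A B, IsRegion U A → IsRegion U B → A ⊆ B → ppSphere A < ppSphere B →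
    ppPlane (φ '' A) < ppPlane (φ '' B)

/-- A set containing no nonempty relatively open subset of the sphere. -/
def IsThin (E : Set (EuclideanSpace ℝ (Fin 3))) : Prop :=
  ∀ G : Set (EuclideanSpace ℝ (Fin 3)), IsOpen G → sphere 0 1 ∩ G ⊆ E → ¬(sphere 0 1 ∩ G).Nonempty

section projection

variable {U A B W E T K : Set (EuclideanSpace ℝ (Fin 3))}
  {φ : EuclideanSpace ℝ (Fin 3) → EuclideanSpace ℝ (Fin 2)}
  {ψ : EuclideanSpace ℝ (Fin 2) → EuclideanSpace ℝ (Fin 3)} {o : EuclideanSpace ℝ (Fin 3)}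
  {h₀ h₁ : ℝ}

namespace IsRegion

lemma subset_sphere (hA : IsRegion U A) : A ⊆ sphere 0 1 := by
  obtain ⟨G, -, rfl⟩ := hA.isOpen_rel
  exact Set.inter_subset_left

lemma subset (hA : IsRegion U A) : A ⊆ U := subset_closure.trans hA.closure_subset

lemma closure_subset_sphere (hA : IsRegion U A) : closure A ⊆ sphere 0 1 :=
  closure_minimal hA.subset_sphere isClosed_sphere

lemma isCompact_closure (hA : IsRegion U A) : IsCompact (closure A) :=
  (isCompact_sphere _ _).of_isClosed_subset isClosed_closure hA.closure_subset_sphere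

lemma boundary_eq (hA : IsRegion U A) : closure A ∩ closure (sphere 0 1 \ A) = closure A \ A := by
  obtain ⟨G, hG, hAG⟩ := hA.isOpen_rel
  have h1 : sphere 0 1 \ A = sphere 0 1 \ G := by
    rw [hAG, Set.sdiff_self_inter]
  have h2 : IsClosed (sphere (0 : EuclideanSpace ℝ (Fin 3)) 1 \ A) := by
    rw [h1]
    exact isClosed_sphere.sdiff hG
  rw [h2.closure_eq]
  ext x
  exact ⟨fun hx => ⟨hx.1, hx.2.2⟩, fun hx => ⟨hx.1, hA.closure_subset_sphere hx.1, hx.2⟩⟩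

lemma ppSphere_eq (hA : IsRegion U A) :
    ppSphere A = ENNReal.ofReal (4 * π) * μH[2] A / μH[1] (closure A \ A) ^ 2 := by
  rw [ppSphere, hA.boundary_eq]

lemma area_pos (hA : IsRegion U A) : 0 < μH[2] A := by
  obtain ⟨G, hG, rfl⟩ := hA.isOpen_rel
  exact hausdorffMeasure_sphere_inter_pos hG hA.nonempty

lemma area_ne_top (hA : IsRegion U A) : μH[2] A ≠ ⊤ :=
  ne_top_of_le_ne_top hausdorffMeasure_sphere_ne_top (measure_mono hA.subset_sphere)

end IsRegion

lemma isThin_of_hausdorffMeasure (hE : μH[1] E ≠ ⊤) : IsThin E := fun _ hG hGE hne =>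
  (hausdorffMeasure_sphere_inter_pos hG hne).ne'
    (measure_mono_null hGE (hausdorffMeasure_two_eq_zero hE))

/-- A thin closed set does not change the closure of a relatively open set. -/
lemma IsThin.subset_closure_diff (hE : IsThin E) {G : Set (EuclideanSpace ℝ (Fin 3))}
    (hG : IsOpen G) : sphere 0 1 ∩ G ⊆ closure ((sphere 0 1 ∩ G) \ E) := by
  rintro x ⟨hxS, hxG⟩
  rw [_root_.mem_closure_iff]
  intro O hO hxO
  by_contra hne
  refine hE (O ∩ G) (hO.inter hG) (fun y hy => ?_) ⟨x, hxS, hxO, hxG⟩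
  by_contra hyE
  exact hne ⟨y, hy.2.1, ⟨hy.1, hy.2.2⟩, hyE⟩

namespace IsMapProjection

lemma injOn (hφ : IsMapProjection U φ ψ) : Set.InjOn φ U :=
  Set.LeftInvOn.injOn (f₁' := ψ) hφ.left_inv

lemma isOpen_image_rel (hφ : IsMapProjection U φ ψ) {G : Set (EuclideanSpace ℝ (Fin 3))}
    (hG : IsOpen G) (hGU : sphere 0 1 ∩ G ⊆ U) : IsOpen (φ '' (sphere 0 1 ∩ G)) := by
  have : φ '' (sphere 0 1 ∩ G) = φ '' U ∩ ψ ⁻¹' G := by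
    ext y
    constructor
    · rintro ⟨x, hx, rfl⟩
      exact ⟨⟨x, hGU hx, rfl⟩, by simpa [hφ.left_inv x (hGU hx)] using hx.2⟩
    · rintro ⟨⟨x, hx, rfl⟩, hxG⟩
      rw [Set.mem_preimage, hφ.left_inv x hx] at hxG
      obtain ⟨G', -, hU⟩ := hφ.isOpen_rel
      exact ⟨x, ⟨(hU ▸ hx : x ∈ sphere 0 1 ∩ G').1, hxG⟩, rfl⟩
  rw [this]
  exact hφ.continuousOn_symm.isOpen_inter_preimage hφ.isOpen_image hG

lemma isOpen_image_region (hφ : IsMapProjection U φ ψ) (hA : IsRegion U A) : IsOpen (φ '' A) := by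
  obtain ⟨G, hG, hAG⟩ := hA.isOpen_rel
  have := hA.subset
  rw [hAG] at this ⊢
  exact hφ.isOpen_image_rel hG this

lemma isCompact_image (hφ : IsMapProjection U φ ψ) (hK : IsCompact K) (hKU : K ⊆ U) :
    IsCompact (φ '' K) :=
  hK.image_of_continuousOn (hφ.continuousOn.mono hKU)

lemma frontier_image (hφ : IsMapProjection U φ ψ) (hA : IsRegion U A) :
    frontier (φ '' A) = φ '' (closure A \ A) := by
  have hcl : closure (φ '' A) = φ '' closure A := by
    refine subset_antisymm ?_ (hφ.continuousOn.mono hA.closure_subset).image_closure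
    exact closure_minimal (Set.image_mono subset_closure)
      (hφ.isCompact_image hA.isCompact_closure hA.closure_subset).isClosed
  rw [(hφ.isOpen_image_region hA).frontier_eq, hcl,
    (hφ.injOn.mono hA.closure_subset).image_sdiff_subset subset_closure]

lemma ppPlane_eq (hφ : IsMapProjection U φ ψ) (hA : IsRegion U A) :
    ppPlane (φ '' A) =
      ENNReal.ofReal (4 * π) * volume (φ '' A) / μH[1] (φ '' (closure A \ A)) ^ 2 := by
  rw [ppPlane, hφ.frontier_image hA]

lemma volume_pos (hφ : IsMapProjection U φ ψ) (hA : IsRegion U A) : 0 < volume (φ '' A) :=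
  (hφ.isOpen_image_region hA).measure_pos _ (hA.nonempty.image φ)

lemma volume_ne_top (hφ : IsMapProjection U φ ψ) (hA : IsRegion U A) : volume (φ '' A) ≠ ⊤ :=
  ne_top_of_le_ne_top (hφ.isCompact_image hA.isCompact_closure hA.closure_subset).measure_ne_top
    (measure_mono (Set.image_mono subset_closure))

lemma isThin_of_image (hφ : IsMapProjection U φ ψ) (hEU : E ⊆ U) (hE : μH[1] (φ '' E) ≠ ⊤) :
    IsThin E := fun _ hG hGE hne =>
  ((hφ.isOpen_image_rel hG (hGE.trans hEU)).measure_pos volume (hne.image φ)).ne'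
    (measure_mono_null (Set.image_mono hGE) (volume_eq_zero_of_hausdorffMeasure_one hE))

end IsMapProjection

namespace IsRegion

lemma diff (hW : IsRegion U W) (hE : IsCompact E) (hne : (W \ E).Nonempty) :
    IsRegion U (W \ E) := by
  obtain ⟨G, hG, hWG⟩ := hW.isOpen_rel
  refine ⟨hne, ⟨G \ E, hG.sdiff hE.isClosed, ?_⟩,
    (closure_mono Set.sdiff_subset).trans hW.closure_subset⟩
  rw [hWG, Set.inter_sdiff_assoc]

lemma boundary_diff_subset : closure (W \ E) \ (W \ E) ⊆ (closure W \ W) ∪ E := by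
  rintro x ⟨hx, hx'⟩
  by_cases hxE : x ∈ E
  · exact Or.inr hxE
  · exact Or.inl ⟨closure_mono Set.sdiff_subset hx, fun hxW => hx' ⟨hxW, hxE⟩⟩

lemma boundary_subset_boundary_diff (hE : IsCompact E) (hEW : E ⊆ W) :
    closure W \ W ⊆ closure (W \ E) \ (W \ E) := by
  rintro x ⟨hx, hxW⟩
  refine ⟨?_, fun h => hxW h.1⟩
  have : closure W ⊆ closure (W \ E) ∪ E := by
    rw [← hE.isClosed.closure_eq, ← closure_union, hE.isClosed.closure_eq, Set.sdiff_union_self]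
    exact closure_mono Set.subset_union_left
  exact (this hx).resolve_right fun h => hxW (hEW h)

lemma subset_closure_diff (hW : IsRegion U W) (hE : IsThin E) : W ⊆ closure (W \ E) := by
  obtain ⟨G, hG, rfl⟩ := hW.isOpen_rel
  exact hE.subset_closure_diff hG

lemma diff_thin (hW : IsRegion U W) (hE : IsCompact E) (hthin : IsThin E) :
    IsRegion U (W \ E) :=
  hW.diff hE (closure_nonempty_iff.1 (hW.nonempty.mono (hW.subset_closure_diff hthin)))

lemma boundary_diff_thin (hW : IsRegion U W) (hE : IsCompact E) (hEW : E ⊆ W) (hthin : IsThin E) :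
    closure (W \ E) \ (W \ E) = (closure W \ W) ∪ E := by
  refine subset_antisymm boundary_diff_subset (Set.union_subset ?_ ?_)
  · exact boundary_subset_boundary_diff hE hEW
  · exact fun x hx => ⟨hW.subset_closure_diff hthin (hEW hx), fun h => h.2 hx⟩

end IsRegion

/-- The open spherical cap of points of height more than `h` in the direction `o`. -/
def cap (o : EuclideanSpace ℝ (Fin 3)) (h : ℝ) : Set (EuclideanSpace ℝ (Fin 3)) :=
  {x ∈ sphere 0 1 | h < inner ℝ o x}

lemma cap_eq (o : EuclideanSpace ℝ (Fin 3)) (h : ℝ) :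
    cap o h = sphere 0 1 ∩ {x | h < inner ℝ o x} := rfl

lemma cap_subset_cap (h : h₀ ≤ h₁) : cap o h₁ ⊆ cap o h₀ :=
  fun _ hx => ⟨hx.1, h.trans_lt hx.2⟩

lemma closure_cap_subset : closure (cap o h₀) ⊆ {x ∈ sphere 0 1 | h₀ ≤ inner ℝ o x} :=
  closure_minimal (fun _ hx => ⟨hx.1, hx.2.le⟩)
    (isClosed_sphere.inter (isClosed_le continuous_const
      (by fun_prop : Continuous fun x : EuclideanSpace ℝ (Fin 3) => inner ℝ o x)))

lemma closure_cap_diff_subset : closure (cap o h₀) \ cap o h₀ ⊆ circ o h₀ := by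
  rintro x ⟨hx, hx'⟩
  obtain ⟨hxS, hle⟩ := closure_cap_subset hx
  exact ⟨hxS, le_antisymm (not_lt.1 fun h => hx' ⟨hxS, h⟩) hle⟩

lemma circ_subset_cap (h : h₀ < h₁) : circ o h₁ ⊆ cap o h₀ := fun _ hx => ⟨hx.1, hx.2 ▸ h⟩

lemma isRegion_cap (ho : ‖o‖ = 1) (hh₀ : h₀ < 1)
    (hU : {x ∈ sphere 0 1 | h₀ ≤ inner ℝ o x} ⊆ U) : IsRegion U (cap o h₀) := by
  refine ⟨⟨o, by simpa using ho, ?_⟩, ⟨_, isOpen_lt continuous_const (by fun_prop), cap_eq o h₀⟩,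
    closure_cap_subset.trans hU⟩
  simpa [real_inner_self_eq_norm_sq, ho] using hh₀

/-- The projection maps sets of finite length to sets of finite length. -/
lemma hausdorffMeasure_image_ne_top_of_orderPreserving (hφ : IsMapProjection U φ ψ)
    (hord : OrderPreserving U φ) (ho : ‖o‖ = 1) (h0 : 0 < h₀) (hh : h₀ < h₁) (h1 : h₁ < 1)
    (hU : {x ∈ sphere 0 1 | h₀ ≤ inner ℝ o x} ⊆ U) (hT : IsCompact T) (hTW : T ⊆ cap o h₀)
    (hTh : Disjoint T (circ o h₁)) (hT1 : μH[1] T ≠ ⊤) :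
    μH[1] (φ '' ((closure (cap o h₀) \ cap o h₀) ∪ T)) ≠ ⊤ := by
  have hW := isRegion_cap ho (hh.trans h1) hU
  have hsq₀ : h₀ ^ 2 ≤ 1 := by nlinarith
  have hsq₁ : h₁ ^ 2 < 1 := by nlinarith
  have hC1 := hausdorffMeasure_circ_ne_top ho hsq₁.le
  have hCc := isCompact_circ o h₁
  have hTC : μH[1] (T ∪ circ o h₁) ≠ ⊤ := by
    refine ne_top_of_le_ne_top ?_ (measure_union_le _ _)
    finiteness
  have hTCW : T ∪ circ o h₁ ⊆ cap o h₀ := Set.union_subset hTW (circ_subset_cap hh)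
  have hA := hW.diff_thin (hT.union hCc) (isThin_of_hausdorffMeasure hTC)
  have hB := hW.diff_thin hT (isThin_of_hausdorffMeasure hT1)
  have hbA := hW.boundary_diff_thin (hT.union hCc) hTCW (isThin_of_hausdorffMeasure hTC)
  have hbB := hW.boundary_diff_thin hT hTW (isThin_of_hausdorffMeasure hT1)
  have hPT : μH[1] ((closure (cap o h₀) \ cap o h₀) ∪ T) ≠ ⊤ := by
    refine ne_top_of_le_ne_top ?_ ((measure_mono (Set.union_subset_union_left T
      closure_cap_diff_subset)).trans (measure_union_le _ _))
    have := hausdorffMeasure_circ_ne_top ho hsq₀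
    finiteness
  have hAB : cap o h₀ \ (T ∪ circ o h₁) ⊆ cap o h₀ \ T :=
    Set.sdiff_subset_sdiff_right Set.subset_union_left
  have hpp : ppSphere (cap o h₀ \ (T ∪ circ o h₁)) < ppSphere (cap o h₀ \ T) := by
    rw [hA.ppSphere_eq, hB.ppSphere_eq, hbA, hbB]
    refine score_lt_score_of_perimeter_lt (by simp [Real.pi_pos]) (by finiteness)
      (measure_mono hAB) hB.area_pos.ne' hB.area_ne_top ?_
    rw [← Set.union_assoc, measure_union _ hCc.isClosed.measurableSet]
    · exact ENNReal.lt_add_right hPT (hausdorffMeasure_circ_pos ho hsq₁).ne'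
    · refine Set.disjoint_union_left.2 ⟨Set.disjoint_left.2 fun x hx hx' => ?_, hTh⟩
      exact hx.2 (circ_subset_cap hh hx')
  have hlt := hord _ _ hA hB hAB hpp
  rw [hφ.ppPlane_eq hB, hbB] at hlt
  intro htop
  simp [htop] at hlt

/-- The images of the circles in a compact range of heights have a length bounded below. -/
lemma exists_le_hausdorffMeasure_image_circ (hφ : ContinuousOn φ U) (hinj : Set.InjOn φ U)
    (ho : ‖o‖ = 1) (h0 : 0 < h₀) (h1 : h₁ < 1) (hh : h₀ ≤ h₁)
    (hU : {x ∈ sphere 0 1 | h₀ ≤ inner ℝ o x} ⊆ U) :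
    ∃ δ : ENNReal, δ ≠ 0 ∧ ∀ h ∈ Set.Icc h₀ h₁, δ ≤ μH[1] (φ '' circ o h) := by
  obtain ⟨P, Q, hP, hQ, hPQ⟩ := exists_opposite_points ho
  have hsq : ∀ h ∈ Set.Icc h₀ h₁, h ^ 2 < 1 := fun h hh => by nlinarith [hh.1, hh.2]
  have hcU : ∀ h ∈ Set.Icc h₀ h₁, circ o h ⊆ U := fun h hh x hx =>
    hU ⟨hx.1, hx.2.symm ▸ hh.1⟩
  have hc : ∀ R : ℝ → EuclideanSpace ℝ (Fin 3), Continuous R →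
      (∀ h ∈ Set.Icc h₀ h₁, R h ∈ circ o h) → ContinuousOn (fun h => φ (R h)) (Set.Icc h₀ h₁) :=
    fun R hR hRc => hφ.comp hR.continuousOn fun h hh => hcU h hh (hRc h hh)
  have hcont : ContinuousOn (fun h => edist (φ (P h)) (φ (Q h))) (Set.Icc h₀ h₁) :=
    continuous_edist.comp_continuousOn ((hc P hP fun h hh => (hPQ h (hsq h hh)).1).prodMk
      (hc Q hQ fun h hh => (hPQ h (hsq h hh)).2.1))
  obtain ⟨m, hm, hmin⟩ := isCompact_Icc.exists_isMinOn (Set.nonempty_Icc.2 hh) hcont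
  obtain ⟨hPm, hQm, hne⟩ := hPQ m (hsq m hm)
  refine ⟨edist (φ (P m)) (φ (Q m)), ?_, fun h hh => (hmin hh).trans ?_⟩
  · exact (edist_pos.2 fun he => hne (hinj (hcU m hm hPm) (hcU m hm hQm) he)).ne'
  · obtain ⟨hPh, hQh, -⟩ := hPQ h (hsq h hh)
    exact edist_le_hausdorffMeasure_one
      ((isPreconnected_circ ho (hsq h hh).le).image φ (hφ.mono (hcU h hh)))
      ⟨_, hPh, rfl⟩ ⟨_, hQh, rfl⟩

/-- The inverse projection maps sets of finite length to sets of finite length. -/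
lemma hausdorffMeasure_ne_top_of_image (hφ : IsMapProjection U φ ψ)
    (hord : OrderPreserving U φ) (ho : ‖o‖ = 1) (h0 : 0 < h₀) (hh : h₀ < h₁) (h1 : h₁ < 1)
    (hU : {x ∈ sphere 0 1 | h₀ ≤ inner ℝ o x} ⊆ U) (hK : IsCompact K) (hKW : K ⊆ cap o h₁)
    (hK1 : μH[1] (φ '' K) ≠ ⊤) : μH[1] K ≠ ⊤ := by
  intro htop
  have hW := isRegion_cap ho (hh.trans h1) hU
  have hU₁ : {x ∈ sphere 0 1 | h₁ ≤ inner ℝ o x} ⊆ U := fun x hx => hU ⟨hx.1, hh.le.trans hx.2⟩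
  have hW₁ := isRegion_cap ho h1 hU₁
  obtain ⟨l, hl₀, hl₁⟩ := exists_between hh
  have hthin := hφ.isThin_of_image (hKW.trans hW₁.subset) hK1
  have hA := hW₁.diff_thin hK hthin
  have hbA := hW₁.boundary_diff_thin hK hKW hthin
  have hC : μH[1] (φ '' circ o h₁) ≠ ⊤ := by
    have hsq : h₁ ^ 2 ≤ 1 := by nlinarith
    refine ne_top_of_le_ne_top (hausdorffMeasure_image_ne_top_of_orderPreserving hφ hord ho h0 hl₀
      (hl₁.trans h1) hU (isCompact_circ o h₁) (circ_subset_cap hh)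
      (Set.disjoint_left.2 fun x hx hx' => ?_) (hausdorffMeasure_circ_ne_top ho hsq))
      (measure_mono (Set.image_mono Set.subset_union_right))
    exact hl₁.ne (hx'.2.symm.trans hx.2)
  have hppA : ppSphere (cap o h₁ \ K) = 0 := by
    rw [hA.ppSphere_eq, hbA]
    have : μH[1] ((closure (cap o h₁) \ cap o h₁) ∪ K) = ⊤ :=
      top_unique (htop ▸ measure_mono Set.subset_union_right)
    simp [this]
  have hα : ppPlane (φ '' (cap o h₁ \ K)) ≠ 0 := by
    rw [hφ.ppPlane_eq hA, hbA, Set.image_union]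
    have hfin : μH[1] (φ '' (closure (cap o h₁) \ cap o h₁) ∪ φ '' K) ≠ ⊤ := by
      refine ne_top_of_le_ne_top ?_ (measure_union_le _ _)
      have := ne_top_of_le_ne_top hC (measure_mono (Set.image_mono closure_cap_diff_subset))
      finiteness
    exact (ENNReal.div_pos (mul_ne_zero (by simp [Real.pi_pos]) (hφ.volume_pos hA).ne')
      (by finiteness)).ne'
  obtain ⟨δ, hδ, hδle⟩ := exists_le_hausdorffMeasure_image_circ hφ.continuousOn hφ.injOn ho
    (h0.trans hl₀) h1 hl₁.le fun x hx => hU ⟨hx.1, hl₀.le.trans hx.2⟩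
  have hWvol := hφ.volume_ne_top hW
  obtain ⟨M, hM⟩ := ENNReal.exists_nat_mul_gt (mul_ne_zero hα (pow_ne_zero 2 hδ))
    (by finiteness : ENNReal.ofReal (4 * π) * volume (φ '' cap o h₀) ≠ ⊤)
  let η : ℕ → ℝ := fun i => l + (h₁ - l) * (i / M)
  have hη : ∀ i ∈ Finset.range M, l ≤ η i ∧ η i < h₁ := fun i hi => by
    have hiM : (i : ℝ) < M := by exact_mod_cast Finset.mem_range.1 hi
    have hM0 : (0 : ℝ) < M := (Nat.cast_nonneg i).trans_lt hiM
    have h2 : (i : ℝ) / M < 1 := (div_lt_one hM0).2 hiM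
    have h3 : 0 ≤ (i : ℝ) / M := by positivity
    constructor
    · have := mul_nonneg (sub_nonneg.2 hl₁.le) h3
      simp only [η]
      linarith
    · have := mul_lt_mul_of_pos_left h2 (sub_pos.2 hl₁)
      simp only [η]
      linarith
  have hηsq : ∀ i ∈ Finset.range M, η i ^ 2 < 1 := fun i hi => by
    obtain ⟨h2, h3⟩ := hη i hi
    nlinarith
  let E := ⋃ i ∈ Finset.range M, circ o (η i)
  have hEc : IsCompact E := (Finset.range M).isCompact_biUnion fun i _ => isCompact_circ _ _
  have hEW : E ⊆ cap o h₀ := Set.iUnion₂_subset fun i hi =>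
    circ_subset_cap (hl₀.trans_le (hη i hi).1)
  have hE1 : μH[1] E ≠ ⊤ := by
    refine ne_top_of_le_ne_top ?_ (measure_biUnion_finset_le _ _)
    exact ENNReal.sum_ne_top.2 fun i hi => hausdorffMeasure_circ_ne_top ho (hηsq i hi).le
  have hB := hW.diff_thin hEc (isThin_of_hausdorffMeasure hE1)
  have hbB := hW.boundary_diff_thin hEc hEW (isThin_of_hausdorffMeasure hE1)
  have hAB : cap o h₁ \ K ⊆ cap o h₀ \ E := fun x hx => by
    refine ⟨cap_subset_cap hh.le hx.1, fun hxE => ?_⟩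
    obtain ⟨i, hi, hxi⟩ := Set.mem_iUnion₂.1 hxE
    exact (hη i hi).2.not_gt (hxi.2 ▸ hx.1.2)
  have hppB : 0 < ppSphere (cap o h₀ \ E) := by
    rw [hB.ppSphere_eq, hbB]
    have hfin : μH[1] ((closure (cap o h₀) \ cap o h₀) ∪ E) ≠ ⊤ := by
      refine ne_top_of_le_ne_top ?_ (measure_union_le _ _)
      have := ne_top_of_le_ne_top (hausdorffMeasure_circ_ne_top ho (by nlinarith : h₀ ^ 2 ≤ 1))
        (measure_mono closure_cap_diff_subset)
      finiteness
    exact ENNReal.div_pos (mul_ne_zero (by simp [Real.pi_pos]) hB.area_pos.ne') (by finiteness)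
  have hlt := hord _ _ hA hB hAB (hppA ▸ hppB)
  have hlen : M * δ ≤ μH[1] (φ '' ((closure (cap o h₀) \ cap o h₀) ∪ E)) := by
    have h2 : φ '' E = ⋃ i ∈ Finset.range M, φ '' circ o (η i) := by
      simp only [E, Set.image_iUnion]
    have hcU : ∀ i ∈ Finset.range M, circ o (η i) ⊆ U := fun i hi =>
      (circ_subset_cap (hl₀.trans_le (hη i hi).1)).trans hW.subset
    refine le_trans ?_ (measure_mono (Set.image_mono Set.subset_union_right))
    rw [h2, measure_biUnion_finset]
    · calc (M : ENNReal) * δ = ∑ i ∈ Finset.range M, δ := by simp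
        _ ≤ _ := Finset.sum_le_sum fun i hi => hδle _ ⟨(hη i hi).1, (hη i hi).2.le⟩
    · intro i hi j hj hij
      refine Set.disjoint_left.2 ?_
      rintro _ ⟨x, hx, rfl⟩ ⟨y, hy, hxy⟩
      have := hφ.injOn (hcU j hj hy) (hcU i hi hx) hxy
      subst this
      have hne : η i = η j := hx.2.symm.trans hy.2
      have hM0 : (M : ℝ) ≠ 0 := by
        have := Finset.mem_range.1 hi
        exact_mod_cast (by omega : M ≠ 0)
      simp only [η, add_right_inj, mul_eq_mul_left_iff, sub_ne_zero.2 hl₁.ne', or_false] at hne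
      rw [div_left_inj' hM0] at hne
      exact hij (by exact_mod_cast hne)
    · exact fun i hi => (hφ.isCompact_image (isCompact_circ _ _) (hcU i hi)).isClosed.measurableSet
  have hle : ppPlane (φ '' (cap o h₁ \ K)) ≤
      ENNReal.ofReal (4 * π) * volume (φ '' cap o h₀) / (M * δ) ^ 2 := by
    refine hlt.le.trans ?_
    rw [hφ.ppPlane_eq hB, hbB]
    have : volume (φ '' (cap o h₀ \ E)) ≤ volume (φ '' cap o h₀) :=
      measure_mono (Set.image_mono Set.sdiff_subset)
    gcongr
  have hle' := ENNReal.mul_le_of_le_div hle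
  refine hM.not_ge (le_trans ?_ hle')
  have hM1 : (M : ENNReal) ≤ (M : ENNReal) ^ 2 := by exact_mod_cast Nat.le_self_pow two_ne_zero M
  rw [mul_pow]
  calc (M : ENNReal) * (ppPlane (φ '' (cap o h₁ \ K)) * δ ^ 2)
      ≤ (M : ENNReal) ^ 2 * (ppPlane (φ '' (cap o h₁ \ K)) * δ ^ 2) := by gcongr
    _ = _ := by ring

/-- If a longer boundary goes along with a larger score, then the gain in area is not negligible. -/
lemma mul_sq_lt_of_score_lt {c a b e p d : ENNReal} (hc0 : c ≠ 0) (ha : a ≠ 0) (hp : p ≠ ⊤)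
    (hb : b ≤ a + e) (h : c * a / p ^ 2 < c * b / (p + d) ^ 2) : a * d ^ 2 < e * p ^ 2 := by
  by_contra! hle
  refine h.not_ge ?_
  rcases eq_or_ne p 0 with rfl | hp0
  · rw [zero_pow two_ne_zero, ENNReal.div_zero (mul_ne_zero hc0 ha)]
    exact le_top
  have hpq : b * p ^ 2 ≤ a * (p + d) ^ 2 := by
    calc b * p ^ 2 ≤ (a + e) * p ^ 2 := by gcongr
      _ = a * p ^ 2 + e * p ^ 2 := by ring
      _ ≤ a * p ^ 2 + a * d ^ 2 := by gcongr
      _ ≤ a * p ^ 2 + a * d ^ 2 + 2 * a * p * d := le_self_add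
      _ = _ := by ring
  refine ENNReal.div_le_of_le_mul ?_
  rw [← ENNReal.mul_div_right_comm, ENNReal.le_div_iff_mul_le (by simp [hp0]) (by simp [hp]),
    mul_assoc, mul_assoc]
  gcongr

namespace IsMapProjection

lemma right_inv (hφ : IsMapProjection U φ ψ) {y : EuclideanSpace ℝ (Fin 2)} (hy : y ∈ φ '' U) :
    φ (ψ y) = y := by
  obtain ⟨x, hx, rfl⟩ := hy
  rw [hφ.left_inv x hx]

lemma image_symm_image (hφ : IsMapProjection U φ ψ) {X : Set (EuclideanSpace ℝ (Fin 2))}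
    (hX : X ⊆ φ '' U) : φ '' (ψ '' X) = X := by
  rw [Set.image_image]
  exact (Set.image_congr fun y hy => hφ.right_inv (hX hy)).trans (Set.image_id' X)

lemma symm_mem (hφ : IsMapProjection U φ ψ) {y : EuclideanSpace ℝ (Fin 2)} (hy : y ∈ φ '' W)
    (hW : W ⊆ U) : ψ y ∈ W := by
  obtain ⟨x, hx, rfl⟩ := hy
  rwa [hφ.left_inv x (hW hx)]

lemma isOpen_rel_symm (hφ : IsMapProjection U φ ψ) {O : Set (EuclideanSpace ℝ (Fin 2))}
    (hO : IsOpen O) (hOU : O ⊆ φ '' U) :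
    ∃ G : Set (EuclideanSpace ℝ (Fin 3)), IsOpen G ∧ ψ '' O = sphere 0 1 ∩ G := by
  obtain ⟨G₀, hG₀, hU⟩ := hφ.isOpen_rel
  obtain ⟨G, hG, hGU⟩ := continuousOn_iff'.1 hφ.continuousOn O hO
  refine ⟨G₀ ∩ G, hG₀.inter hG, ?_⟩
  rw [← Set.inter_assoc, ← hU, Set.inter_comm, ← hGU]
  ext x
  constructor
  · rintro ⟨y, hy, rfl⟩
    exact ⟨by rwa [Set.mem_preimage, hφ.right_inv (hOU hy)], hφ.symm_mem (hOU hy) subset_rfl⟩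
  · rintro ⟨hxO, hxU⟩
    exact ⟨φ x, hxO, hφ.left_inv x hxU⟩

end IsMapProjection

/-- The projection preserves weak comparisons of lengths of disjoint compact sets. -/
lemma hausdorffMeasure_image_le_of_le (hφ : IsMapProjection U φ ψ)
    (hord : OrderPreserving U φ) (ho : ‖o‖ = 1) (h0 : 0 < h₀) (hh : h₀ < h₁) (h1 : h₁ < 1)
    (hU : {x ∈ sphere 0 1 | h₀ ≤ inner ℝ o x} ⊆ U) (hT : IsCompact T) (hTW : T ⊆ cap o h₁)
    (hK : IsCompact K) (hKW : K ⊆ cap o h₁) (hTK : Disjoint T K) (hle : μH[1] T ≤ μH[1] K)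
    (hK1 : μH[1] K ≠ ⊤) (hK0 : μH[1] K ≠ 0) : μH[1] (φ '' T) ≤ μH[1] (φ '' K) := by
  by_contra! hlt
  have hW := isRegion_cap ho (hh.trans h1) hU
  have hcap : cap o h₁ ⊆ cap o h₀ := cap_subset_cap hh.le
  have hT1 := ne_top_of_le_ne_top hK1 hle
  obtain ⟨l, hl₀, hl₁⟩ := exists_between hh
  have hfin := hausdorffMeasure_image_ne_top_of_orderPreserving hφ hord ho h0 hl₀ (hl₁.trans h1) hU
    hT (hTW.trans hcap) (Set.disjoint_left.2 fun x hx hx' => hl₁.not_gt (hx'.2 ▸ (hTW hx).2)) hT1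
  have hp1 := ne_top_of_le_ne_top hfin (measure_mono (Set.image_mono Set.subset_union_left))
  have ht1 := ne_top_of_le_ne_top hfin (measure_mono (Set.image_mono Set.subset_union_right))
  have hs1 := ne_top_of_lt hlt
  have hK1' := volume_eq_zero_of_hausdorffMeasure_one hs1
  have hA₀ : IsRegion U (cap o h₀ \ {x ∈ sphere 0 1 | h₁ ≤ inner ℝ o x}) := by
    refine hW.diff ((isCompact_sphere 0 1).inter_right (isClosed_le continuous_const
      (by fun_prop : Continuous fun x : EuclideanSpace ℝ (Fin 3) => inner ℝ o x))) ?_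
    obtain ⟨x, hx⟩ := nonempty_of_measure_ne_zero
      (hausdorffMeasure_circ_pos ho (by nlinarith : l ^ 2 < 1)).ne'
    exact ⟨x, circ_subset_cap hl₀ hx, fun h => hl₁.not_ge (hx.2 ▸ h.2)⟩
  set P := closure (cap o h₀) \ cap o h₀ with hP
  set a₀ := volume (φ '' (cap o h₀ \ {x ∈ sphere 0 1 | h₁ ≤ inner ℝ o x})) with ha₀
  have ha₀0 : a₀ ≠ 0 := (hφ.volume_pos hA₀).ne'
  set s := μH[1] (φ '' K) with hs
  set t := μH[1] (φ '' T) with ht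
  set M := μH[1] (φ '' P) + (t + 2) * ENNReal.ofReal (2 * π) with hM
  have hd0 : t - s ≠ 0 := (tsub_pos_of_lt hlt).ne'
  have hMs : M + s + 1 ≠ ⊤ := by finiteness
  set ε := a₀ * (t - s) ^ 2 / (M + s + 1) ^ 2 with hε
  have hε0 : ε ≠ 0 :=
    (ENNReal.div_pos (mul_ne_zero ha₀0 (pow_ne_zero 2 hd0)) (by finiteness)).ne'
  have hεM : ε * (M + s) ^ 2 ≤ a₀ * (t - s) ^ 2 := by
    calc ε * (M + s) ^ 2 ≤ ε * (M + s + 1) ^ 2 := by gcongr ε * ?_ ^ 2; exact le_self_add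
      _ = _ := ENNReal.div_mul_cancel (by simp) (by finiteness)
  have hTU : T ⊆ U := (hTW.trans hcap).trans hW.subset
  have hOW : cap o h₁ \ K ⊆ U := (Set.sdiff_subset.trans hcap).trans hW.subset
  have hOeq : cap o h₁ \ K = sphere 0 1 ∩ ({x | h₁ < inner ℝ o x} \ K) := by
    rw [cap_eq, Set.inter_sdiff_assoc]
  have hOopen : IsOpen (φ '' (cap o h₁ \ K)) := by
    have hG : IsOpen ({x : EuclideanSpace ℝ (Fin 3) | h₁ < inner ℝ o x} \ K) :=
      (isOpen_lt continuous_const (by fun_prop)).sdiff hK.isClosed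
    rw [hOeq] at hOW ⊢
    exact hφ.isOpen_image_rel hG hOW
  obtain ⟨N, hN, hTN, hNO, hNf, hNv⟩ := exists_thin_neighborhood (hφ.isCompact_image hT hTU) ht1
    hOopen (Set.image_mono fun x hx => ⟨hTW hx, Set.disjoint_left.1 hTK hx⟩) hε0
  have hNU : N ⊆ φ '' U := hNO.trans (Set.image_mono hOW)
  have hFN : frontier N ⊆ N := hN.isClosed.frontier_subset
  have hNW : ψ '' N ⊆ cap o h₁ \ K := by
    rintro _ ⟨y, hy, rfl⟩
    exact hφ.symm_mem (hNO hy) hOW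
  have hcomp : ∀ X ⊆ N, IsCompact X → IsCompact (ψ '' X) := fun X hX hXc =>
    hXc.image_of_continuousOn (hφ.continuousOn_symm.mono (hX.trans hNU))
  have hNc := hcomp N subset_rfl hN
  have hFc := hcomp _ hFN (hN.of_isClosed_subset isClosed_frontier hFN)
  have hFW : ψ '' frontier N ⊆ cap o h₁ := ((Set.image_mono hFN).trans hNW).trans Set.sdiff_subset
  have hφF : φ '' (ψ '' frontier N) = frontier N := hφ.image_symm_image (hFN.trans hNU)
  have hF1 : μH[1] (ψ '' frontier N) ≠ ⊤ := by
    refine hausdorffMeasure_ne_top_of_image hφ hord ho h0 hh h1 hU hFc hFW ?_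
    rw [hφF]
    exact ne_top_of_le_ne_top (by finiteness) hNf
  have hψN : ∀ x ∈ U, ∀ X ⊆ N, x ∈ ψ '' X → φ x ∈ X := by
    rintro _ hx X hX ⟨y, hy, rfl⟩
    rwa [hφ.right_inv (hNU (hX hy))]
  have hTI : T ⊆ ψ '' interior N := fun x hx =>
    ⟨φ x, hTN ⟨x, hx, rfl⟩, hφ.left_inv x (hTU hx)⟩
  have hIF : Disjoint (ψ '' interior N) (ψ '' frontier N) := by
    refine Set.disjoint_left.2 fun x hx hx' => ?_
    have hxU := hOW (hNW (Set.image_mono interior_subset hx))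
    exact (hψN x hxU _ hFN hx').2 (hψN x hxU _ interior_subset hx)
  obtain ⟨G, hG, hIG⟩ := hφ.isOpen_rel_symm isOpen_interior (interior_subset.trans hNU)
  have hTne : T.Nonempty := by
    refine Set.nonempty_iff_ne_empty.2 fun h => ?_
    simp [ht, h] at hlt
  have hI : IsRegion U (ψ '' interior N) :=
    ⟨hTne.mono hTI, ⟨G, hG, hIG⟩, (closure_minimal (Set.image_mono interior_subset)
      hNc.isClosed).trans (hNW.trans hOW)⟩
  have hIT := hI.diff_thin hT (isThin_of_hausdorffMeasure hT1)
  have hNK : ψ '' N ∪ K ⊆ cap o h₁ := Set.union_subset (hNW.trans Set.sdiff_subset) hKW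
  have hA₀A : cap o h₀ \ {x ∈ sphere 0 1 | h₁ ≤ inner ℝ o x} ⊆ cap o h₀ \ (ψ '' N ∪ K) :=
    Set.sdiff_subset_sdiff_right fun x hx => ⟨(hNK hx).1, (hNK hx).2.le⟩
  have hA : IsRegion U (cap o h₀ \ (ψ '' N ∪ K)) :=
    hW.diff (hNc.union hK) (hA₀.nonempty.mono hA₀A)
  have hFT1 : μH[1] (ψ '' frontier N ∪ T) ≠ ⊤ :=
    ne_top_of_le_ne_top (by finiteness) (measure_union_le _ _)
  have hFTW : ψ '' frontier N ∪ T ⊆ cap o h₀ := (Set.union_subset hFW hTW).trans hcap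
  have hB := hW.diff_thin (hFc.union hT) (isThin_of_hausdorffMeasure hFT1)
  have hbB := hW.boundary_diff_thin (hFc.union hT) hFTW (isThin_of_hausdorffMeasure hFT1)
  rw [← Set.union_assoc, ← hP] at hbB
  have hbA : closure (cap o h₀ \ (ψ '' N ∪ K)) \ (cap o h₀ \ (ψ '' N ∪ K)) =
      P ∪ ψ '' frontier N ∪ K := by
    refine subset_antisymm (fun x hx => ?_)
      (Set.union_subset (Set.union_subset ?_ fun x hx => ⟨?_, fun h => ?_⟩) fun x hx => ⟨?_, ?_⟩)
    · rcases IsRegion.boundary_diff_subset hx with hxP | hxN | hxK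
      · exact Or.inl (Or.inl hxP)
      · refine Or.inl (Or.inr ?_)
        obtain ⟨y, hy, rfl⟩ := hxN
        refine ⟨y, ⟨subset_closure hy, fun hyI => ?_⟩, rfl⟩
        have hyG : ψ y ∈ sphere 0 1 ∩ G := hIG ▸ ⟨y, hyI, rfl⟩
        obtain ⟨z, hzG, hzA⟩ := _root_.mem_closure_iff.1 hx.1 G hG hyG.2
        have hz : z ∈ ψ '' interior N := hIG ▸ ⟨hA.subset_sphere hzA, hzG⟩
        exact hzA.2 (Or.inl (Set.image_mono interior_subset hz))
      · exact Or.inr hxK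
    · exact IsRegion.boundary_subset_boundary_diff (hNc.union hK) (hNK.trans hcap)
    · obtain ⟨y, hy, rfl⟩ := hx
      have hyO := hNO (hFN hy)
      have hycl : y ∈ closure (φ '' (cap o h₁ \ K) ∩ Nᶜ) :=
        hOopen.inter_closure ⟨hyO, (frontier_eq_closure_inter_closure.le hy).2⟩
      refine ((hφ.continuousOn_symm y (hNU (hFN hy))).mono
        (Set.inter_subset_left.trans (Set.image_mono hOW))).mem_closure hycl ?_
      rintro _ ⟨⟨w, hw, rfl⟩, hwN⟩
      rw [hφ.left_inv w (hOW hw)]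
      exact ⟨hcap hw.1, fun h => h.elim (fun h => hwN (hψN w (hOW hw) N subset_rfl h)) hw.2⟩
    · exact h.2 (Or.inl (Set.image_mono hFN hx))
    · have hWN : IsRegion U (cap o h₀ \ ψ '' N) :=
        hW.diff hNc (hA.nonempty.mono (Set.sdiff_subset_sdiff_right Set.subset_union_left))
      rw [← Set.sdiff_sdiff]
      exact hWN.subset_closure_diff (isThin_of_hausdorffMeasure hK1)
        ⟨hcap (hKW hx), fun h => (hNW h).2 hx⟩
    · exact fun h => h.2 (Or.inr hx)
  have hAB : cap o h₀ \ (ψ '' N ∪ K) ⊆ cap o h₀ \ (ψ '' frontier N ∪ T) :=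
    Set.sdiff_subset_sdiff_right (Set.union_subset
      ((Set.image_mono hFN).trans Set.subset_union_left)
      ((hTI.trans (Set.image_mono interior_subset)).trans Set.subset_union_left))
  have hPd : ∀ X ⊆ cap o h₁, Disjoint P X := fun X hX =>
    Set.disjoint_left.2 fun x hx hx' => hx.2 (hcap (hX hx'))
  have hdT : Disjoint (P ∪ ψ '' frontier N) T :=
    Set.disjoint_union_left.2 ⟨hPd T hTW, (hIF.mono_left hTI).symm⟩
  have hdK : Disjoint (P ∪ ψ '' frontier N) K :=
    Set.disjoint_union_left.2 ⟨hPd K hKW,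
      Set.disjoint_left.2 fun x hx => (hNW (Set.image_mono hFN hx)).2⟩
  have harea : μH[2] (cap o h₀ \ (ψ '' N ∪ K)) < μH[2] (cap o h₀ \ (ψ '' frontier N ∪ T)) := by
    refine (ENNReal.lt_add_right hA.area_ne_top hIT.area_pos.ne').trans_le ?_
    obtain ⟨G', hG', hITG⟩ := hIT.isOpen_rel
    rw [← measure_union]
    · refine measure_mono (Set.union_subset hAB fun x hx => ⟨?_, fun h => ?_⟩)
      · exact hcap (hNW (Set.image_mono interior_subset hx.1)).1
      · exact h.elim (Set.disjoint_left.1 hIF hx.1) hx.2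
    · exact Set.disjoint_left.2 fun x hx hx' =>
        hx.2 (Or.inl (Set.image_mono interior_subset hx'.1))
    · rw [hITG]
      exact isClosed_sphere.measurableSet.inter hG'.measurableSet
  have hpp : ppSphere (cap o h₀ \ (ψ '' N ∪ K)) < ppSphere (cap o h₀ \ (ψ '' frontier N ∪ T)) := by
    rw [hA.ppSphere_eq, hB.ppSphere_eq, hbA, hbB, measure_union hdK hK.isClosed.measurableSet,
      measure_union hdT hT.isClosed.measurableSet]
    refine score_lt_score (by simp [Real.pi_pos]) (by finiteness) harea (by gcongr)
      (by simp [hK0]) ?_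
    have hP1 : μH[1] P ≠ ⊤ := ne_top_of_le_ne_top
      (hausdorffMeasure_circ_ne_top ho (by nlinarith : h₀ ^ 2 ≤ 1))
      (measure_mono closure_cap_diff_subset)
    have : μH[1] (P ∪ ψ '' frontier N) ≠ ⊤ :=
      ne_top_of_le_ne_top (by finiteness) (measure_union_le _ _)
    finiteness
  have hltP := hord _ _ hA hB hAB hpp
  rw [hφ.ppPlane_eq hA, hφ.ppPlane_eq hB, hbA, hbB, Set.image_union, Set.image_union _ _ T,
    measure_union _ (hφ.isCompact_image hT hTU).isClosed.measurableSet] at hltP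
  · set x := μH[1] (φ '' (P ∪ ψ '' frontier N)) with hx
    have hxM : x ≤ M := by
      rw [hx, Set.image_union, hφF]
      exact (measure_union_le _ _).trans (add_le_add le_rfl hNf)
    have hxs : x + s ≠ ⊤ := by
      have := ne_top_of_le_ne_top (by finiteness : M ≠ ⊤) hxM
      finiteness
    have ha₀a : a₀ ≤ volume (φ '' (cap o h₀ \ (ψ '' N ∪ K))) :=
      measure_mono (Set.image_mono hA₀A)
    have hvol : volume (φ '' (cap o h₀ \ (ψ '' frontier N ∪ T))) ≤
        volume (φ '' (cap o h₀ \ (ψ '' N ∪ K))) + ε := by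
      have hsub : φ '' (cap o h₀ \ (ψ '' frontier N ∪ T)) ⊆
          φ '' (cap o h₀ \ (ψ '' N ∪ K)) ∪ N ∪ φ '' K := by
        rintro _ ⟨y, hy, rfl⟩
        by_cases hyK : y ∈ K
        · exact Or.inr ⟨y, hyK, rfl⟩
        by_cases hyN : y ∈ ψ '' N
        · exact Or.inl (Or.inr (hψN y (hW.subset hy.1) N subset_rfl hyN))
        · exact Or.inl (Or.inl ⟨y, ⟨hy.1, fun h => h.elim hyN hyK⟩, rfl⟩)
      refine (measure_mono hsub).trans ((measure_union_le _ _).trans ?_)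
      rw [hK1', add_zero]
      exact (measure_union_le _ _).trans (by gcongr)
    have hkey := mul_sq_lt_of_score_lt (d := t - s) (p := x + s) (by simp [Real.pi_pos])
      (hφ.volume_pos hA).ne' hxs hvol (c := ENNReal.ofReal (4 * π)) (by
        rw [add_assoc, add_tsub_cancel_of_le hlt.le]
        refine lt_of_le_of_lt ?_ hltP
        have := measure_union_le (μ := μH[1]) (φ '' (P ∪ ψ '' frontier N)) (φ '' K)
        gcongr)
    refine hkey.not_ge ?_
    calc ε * (x + s) ^ 2 ≤ ε * (M + s) ^ 2 := by gcongr
      _ ≤ a₀ * (t - s) ^ 2 := hεM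
      _ ≤ _ := by gcongr
  · refine Set.disjoint_left.2 ?_
    rintro _ ⟨y, hy, rfl⟩ ⟨z, hz, hzy⟩
    have hyU : y ∈ U := hy.elim (fun h => hW.closure_subset h.1)
      fun h => hOW (hNW (Set.image_mono hFN h))
    exact Set.disjoint_left.1 hdT hy (hφ.injOn (hTU hz) hyU hzy ▸ hz)

lemma exists_ball_subset_cap {p : EuclideanSpace ℝ (Fin 3)} (hp : p ∈ cap o h₁) :
    ∃ ε > 0, sphere 0 1 ∩ ball p ε ⊆ cap o h₁ := by
  have hopen : IsOpen {x : EuclideanSpace ℝ (Fin 3) | h₁ < inner ℝ o x} :=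
    isOpen_lt continuous_const (by fun_prop)
  obtain ⟨ε, hε, hsub⟩ := Metric.isOpen_iff.1 hopen p hp.2
  exact ⟨ε, hε, fun x hx => ⟨hx.1, hsub hx.2⟩⟩

/-- Congruent pairs of points near two distinct points of the cap have images whose distances are
comparable. -/
lemma exists_forall_dist_image_le (hφ : IsMapProjection U φ ψ)
    (hord : OrderPreserving U φ) (ho : ‖o‖ = 1) (h0 : 0 < h₀) (hh : h₀ < h₁) (h1 : h₁ < 1)
    (hU : {x ∈ sphere 0 1 | h₀ ≤ inner ℝ o x} ⊆ U) {p q : EuclideanSpace ℝ (Fin 3)}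
    (hp : p ∈ cap o h₁) (hq : q ∈ cap o h₁) (hpq : p ≠ q) :
    ∃ κ > 0, ∀ u ∈ sphere 0 1 ∩ ball p κ, ∀ v ∈ sphere 0 1 ∩ ball p κ,
      ∀ x ∈ sphere 0 1 ∩ ball q κ, ∀ y ∈ sphere 0 1 ∩ ball q κ,
        dist x y = dist u v → dist (φ x) (φ y) ≤ dist (φ u) (φ v) := by
  obtain ⟨ε₁, hε₁, hpcap⟩ := exists_ball_subset_cap hp
  obtain ⟨ε₂, hε₂, hqcap⟩ := exists_ball_subset_cap hq
  have hcapU : cap o h₁ ⊆ U := fun x hx => hU ⟨hx.1, (hh.trans hx.2).le⟩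
  obtain ⟨η, hη, hη₁, hη₂, hη₃⟩ : ∃ η > 0, η ≤ ε₁ ∧ 3 * η ≤ ε₂ ∧ 4 * η ≤ dist p q := by
    have := dist_pos.2 hpq
    refine ⟨min ε₁ (min (ε₂ / 3) (dist p q / 4)), by positivity, min_le_left _ _, ?_, ?_⟩
    · have := (min_le_right ε₁ _).trans (min_le_left (ε₂ / 3) (dist p q / 4))
      linarith
    · have := (min_le_right ε₁ _).trans (min_le_right (ε₂ / 3) (dist p q / 4))
      linarith
  have hηcap : sphere 0 1 ∩ ball p η ⊆ cap o h₁ := fun x hx =>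
    hpcap ⟨hx.1, ball_subset_ball hη₁ hx.2⟩
  obtain ⟨r, hr, hrsub⟩ := Metric.isOpen_iff.1
    (hφ.isOpen_image_rel isOpen_ball (hηcap.trans hcapU)) (φ p)
    ⟨p, ⟨hp.1, mem_ball_self hη⟩, rfl⟩
  obtain ⟨κ, hκ, hκr⟩ := Metric.continuousOn_iff.1 hφ.continuousOn p (hcapU hp) r hr
  refine ⟨min η κ, lt_min hη hκ, fun u hu v hv x hx y hy hxy => ?_⟩
  rcases eq_or_ne u v with rfl | huv
  · rw [dist_self, dist_eq_zero] at hxy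
    simp [hxy]
  have hball : ∀ w ∈ sphere 0 1 ∩ ball p (min η κ),
      w ∈ U ∧ φ w ∈ ball (φ p) r ∧ w ∈ ball p η := fun w hw => by
    have hwη := ball_subset_ball (min_le_left η κ) hw.2
    have hwU := hcapU (hηcap ⟨hw.1, hwη⟩)
    exact ⟨hwU, hκr w hwU (ball_subset_ball (min_le_right η κ) hw.2), hwη⟩
  obtain ⟨huU, hur, huη⟩ := hball u hu
  obtain ⟨hvU, hvr, -⟩ := hball v hv
  have hseg : segment ℝ (φ u) (φ v) ⊆ φ '' (sphere 0 1 ∩ ball p η) :=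
    ((convex_ball (φ p) r).segment_subset hur hvr).trans hrsub
  have hsegU : segment ℝ (φ u) (φ v) ⊆ φ '' U := hseg.trans (Set.image_mono (hηcap.trans hcapU))
  set K := ψ '' segment ℝ (φ u) (φ v) with hK
  have hψ := hφ.continuousOn_symm.mono hsegU
  have hKη : K ⊆ sphere 0 1 ∩ ball p η := by
    rintro _ ⟨z, hz, rfl⟩
    exact hφ.symm_mem (hseg hz) (hηcap.trans hcapU)
  have hφK : φ '' K = segment ℝ (φ u) (φ v) := hφ.image_symm_image hsegU
  have hKc : IsCompact K := by
    refine IsCompact.image_of_continuousOn ?_ hψ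
    rw [segment_eq_image_lineMap]
    exact isCompact_Icc.image AffineMap.lineMap_continuous
  have hKpre : IsPreconnected K := (convex_segment _ _).isPreconnected.image ψ hψ
  have huK : u ∈ K := ⟨φ u, left_mem_segment ℝ _ _, hφ.left_inv u huU⟩
  have hvK : v ∈ K := ⟨φ v, right_mem_segment ℝ _ _, hφ.left_inv v hvU⟩
  have hK1 : μH[1] K ≠ ⊤ := by
    refine hausdorffMeasure_ne_top_of_image hφ hord ho h0 hh h1 hU hKc (hKη.trans hηcap) ?_
    rw [hφK, hausdorffMeasure_segment]
    exact edist_ne_top _ _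
  have hK0 : μH[1] K ≠ 0 :=
    ((edist_pos.2 huv).trans_le (edist_le_hausdorffMeasure_one hKpre huK hvK)).ne'
  obtain ⟨e, rfl, rfl⟩ := exists_linearIsometryEquiv (by simpa using hu.1) (by simpa using hv.1)
    (by simpa using hx.1) (by simpa using hy.1) hxy.symm
  have hT : e '' K ⊆ sphere 0 1 ∩ ball q (3 * η) := by
    rintro _ ⟨k, hk, rfl⟩
    refine ⟨by simpa using (hKη hk).1, ?_⟩
    have h2 : dist (e k) (e u) = dist k u := e.dist_map k u
    have h3 := dist_triangle_right k u p
    have h4 := dist_triangle (e k) (e u) q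
    have h5 := mem_ball.1 (hKη hk).2
    have h6 := mem_ball.1 huη
    have h7 := (mem_ball.1 hx.2).trans_le (min_le_left η κ)
    rw [mem_ball]
    linarith
  have hTcap : e '' K ⊆ cap o h₁ := fun z hz =>
    hqcap ⟨(hT hz).1, ball_subset_ball hη₂ (hT hz).2⟩
  have hdisj : Disjoint (e '' K) K := by
    refine Set.disjoint_left.2 fun z hz hz' => ?_
    have h2 := mem_ball.1 (hT hz).2
    have h3 := mem_ball.1 (hKη hz').2
    have h4 := dist_triangle_left p q z
    linarith
  have hle := hausdorffMeasure_image_le_of_le hφ hord ho h0 hh h1 hU (hKc.image e.continuous)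
    hTcap hKc (hKη.trans hηcap) hdisj
    (e.isometry.hausdorffMeasure_image (Or.inl zero_le_one) K).le hK1 hK0
  rw [hφK, hausdorffMeasure_segment] at hle
  have hedist := (edist_le_hausdorffMeasure_one ((hKpre.image e e.continuous.continuousOn).image φ
    (hφ.continuousOn.mono (hTcap.trans hcapU))) ⟨e u, ⟨u, huK, rfl⟩, rfl⟩
    ⟨e v, ⟨v, hvK, rfl⟩, rfl⟩).trans hle
  rwa [edist_dist, edist_dist, ENNReal.ofReal_le_ofReal_iff dist_nonneg] at hedist

/-- Near the centre of the cap, the distance of two images depends only on the distance of the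
points. -/
lemma exists_forall_dist_image_eq (hφ : IsMapProjection U φ ψ)
    (hord : OrderPreserving U φ) (ho : ‖o‖ = 1) (h0 : 0 < h₀) (hh : h₀ < h₁) (h1 : h₁ < 1)
    (hU : {x ∈ sphere 0 1 | h₀ ≤ inner ℝ o x} ⊆ U) :
    ∃ κ > 0, sphere 0 1 ∩ ball o κ ⊆ U ∧
      ∀ u ∈ sphere 0 1 ∩ ball o κ, ∀ v ∈ sphere 0 1 ∩ ball o κ,
      ∀ x ∈ sphere 0 1 ∩ ball o κ, ∀ y ∈ sphere 0 1 ∩ ball o κ,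
        dist x y = dist u v → dist (φ x) (φ y) = dist (φ u) (φ v) := by
  have hoo : inner ℝ o o = (1 : ℝ) := by simp [ho]
  have hoc : o ∈ cap o h₁ := ⟨by simpa using ho, hoo.symm ▸ h1⟩
  obtain ⟨l, hl₁, hl⟩ := exists_between h1
  obtain ⟨q, hqc⟩ := nonempty_of_measure_ne_zero
    (hausdorffMeasure_circ_pos ho (by nlinarith : l ^ 2 < 1)).ne'
  have hq : q ∈ cap o h₁ := circ_subset_cap hl₁ hqc
  have hoq : o ≠ q := by
    rintro rfl
    exact hl.ne (hqc.2.symm.trans hoo)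
  obtain ⟨κ₁, hκ₁, hle₁⟩ := exists_forall_dist_image_le hφ hord ho h0 hh h1 hU hoc hq hoq
  obtain ⟨κ₂, hκ₂, hle₂⟩ := exists_forall_dist_image_le hφ hord ho h0 hh h1 hU hq hoc hoq.symm
  obtain ⟨ε, hε, hsub⟩ := exists_ball_subset_cap hoc
  obtain ⟨e, heo, -⟩ := exists_linearIsometryEquiv ho ho (by simpa using hq.1)
    (by simpa using hq.1) (by simp : dist o o = dist q q)
  have hb₁ : ∀ w ∈ sphere 0 1 ∩ ball o (min ε (min κ₁ κ₂)), w ∈ sphere 0 1 ∩ ball o κ₁ :=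
    fun w hw => ⟨hw.1, ball_subset_ball ((min_le_right _ _).trans (min_le_left _ _)) hw.2⟩
  have hb₂ : ∀ w ∈ sphere 0 1 ∩ ball o (min ε (min κ₁ κ₂)), w ∈ sphere 0 1 ∩ ball o κ₂ :=
    fun w hw => ⟨hw.1, ball_subset_ball ((min_le_right _ _).trans (min_le_right _ _)) hw.2⟩
  have he : ∀ κ, ∀ w ∈ sphere 0 1 ∩ ball o κ, e w ∈ sphere 0 1 ∩ ball q κ := fun κ w hw => by
    refine ⟨by simpa using hw.1, ?_⟩
    rw [mem_ball, ← heo, e.dist_map]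
    exact hw.2
  have hle : ∀ u ∈ sphere 0 1 ∩ ball o (min ε (min κ₁ κ₂)),
      ∀ v ∈ sphere 0 1 ∩ ball o (min ε (min κ₁ κ₂)),
      ∀ x ∈ sphere 0 1 ∩ ball o (min ε (min κ₁ κ₂)),
      ∀ y ∈ sphere 0 1 ∩ ball o (min ε (min κ₁ κ₂)),
        dist x y = dist u v → dist (φ x) (φ y) ≤ dist (φ u) (φ v) := fun u hu v hv x hx y hy h =>
    (hle₂ _ (he _ u (hb₂ u hu)) _ (he _ v (hb₂ v hv)) x (hb₂ x hx) y (hb₂ y hy)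
      (by rw [e.dist_map, h])).trans
    (hle₁ u (hb₁ u hu) v (hb₁ v hv) _ (he _ u (hb₁ u hu)) _ (he _ v (hb₁ v hv)) (e.dist_map u v))
  refine ⟨min ε (min κ₁ κ₂), by positivity, fun x hx => ?_, fun u hu v hv x hx y hy h =>
    le_antisymm (hle u hu v hv x hx y hy h) (hle x hx y hy u hu v hv h.symm)⟩
  have := hsub ⟨hx.1, ball_subset_ball (min_le_left _ _) hx.2⟩
  exact hU ⟨this.1, (hh.trans this.2).le⟩

/-- An injective continuous map from a neighbourhood in the sphere to the plane cannot have the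
property that the distance of two images depends only on the distance of the points. -/
lemma false_of_dist_image_eq (ho : ‖o‖ = 1) {κ : ℝ} (hκ : 0 < κ) (hκU : sphere 0 1 ∩ ball o κ ⊆ U)
    (hφ : ContinuousOn φ U) (hinj : Set.InjOn φ U)
    (hdist : ∀ u ∈ sphere 0 1 ∩ ball o κ, ∀ v ∈ sphere 0 1 ∩ ball o κ,
      ∀ x ∈ sphere 0 1 ∩ ball o κ, ∀ y ∈ sphere 0 1 ∩ ball o κ,
        dist x y = dist u v → dist (φ x) (φ y) = dist (φ u) (φ v)) : False := by
  obtain ⟨b, rfl⟩ := exists_orthonormalBasis_zero_eq ho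
  let ρ : ℝ → ℝ := fun r => √(r ^ 2 - r ^ 4 / 4)
  let pt : ℝ → ℝ → ℝ → EuclideanSpace ℝ (Fin 3) := fun r c s =>
    frame b (1 - r ^ 2 / 2) (ρ r * c) (ρ r * s)
  obtain ⟨R, hR, hRκ, hR1⟩ : ∃ R > 0, R < κ ∧ R ≤ 1 :=
    ⟨min (κ / 2) 1, by positivity, (min_le_left _ _).trans_lt (by linarith), min_le_right _ _⟩
  have hρsq : ∀ r ∈ Set.Icc 0 R, ρ r ^ 2 = r ^ 2 - r ^ 4 / 4 := fun r hr => by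
    refine Real.sq_sqrt ?_
    have h2 : r ^ 2 ≤ 1 := by nlinarith [hr.1, hr.2]
    nlinarith [sq_nonneg r]
  have hpt_o : ∀ r ∈ Set.Icc 0 R, ∀ c s : ℝ, c ^ 2 + s ^ 2 = 1 → dist (pt r c s) (b 0) = r :=
    fun r hr c s hcs => by
      rw [← frame_one_zero_zero b, dist_frame, ← Real.sqrt_sq hr.1]
      congr 1
      rw [Real.sqrt_sq hr.1]
      linear_combination (hρsq r hr) + ρ r ^ 2 * hcs
  have hpt : ∀ r ∈ Set.Icc 0 R, ∀ c s : ℝ, c ^ 2 + s ^ 2 = 1 →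
      pt r c s ∈ sphere 0 1 ∩ ball (b 0) κ := fun r hr c s hcs => by
    refine ⟨?_, by rw [mem_ball, hpt_o r hr c s hcs]; exact hr.2.trans_lt hRκ⟩
    rw [mem_sphere_zero_iff_norm, norm_frame, Real.sqrt_eq_one]
    linear_combination (hρsq r hr) + ρ r ^ 2 * hcs
  have hpt_pt : ∀ r c s c' s' : ℝ, dist (pt r c s) (pt r c' s') =
      √(ρ r ^ 2 * ((c - c') ^ 2 + (s - s') ^ 2)) := fun r c s c' s' => by
    rw [dist_frame]
    congr 1
    ring
  have hoκ : b 0 ∈ sphere 0 1 ∩ ball (b 0) κ := ⟨by simp, mem_ball_self hκ⟩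
  have h10 : (1 : ℝ) ^ 2 + 0 ^ 2 = 1 := by norm_num
  have h3 : √3 ^ 2 = (3 : ℝ) := Real.sq_sqrt (by norm_num)
  have hc1 : (1 / 2 : ℝ) ^ 2 + (√3 / 2) ^ 2 = 1 := by linear_combination h3 / 4
  have hc2 : (-1 / 2 : ℝ) ^ 2 + (√3 / 2) ^ 2 = 1 := by linear_combination h3 / 4
  have hc4 : (-1 / 2 : ℝ) ^ 2 + (-√3 / 2) ^ 2 = 1 := by linear_combination h3 / 4
  let G : ℝ → ℝ := fun r => dist (φ (pt r 1 0)) (φ (b 0))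
  have hρlt : ∀ r ∈ Set.Icc 0 R, 0 < r → 0 < ρ r ∧ ρ r < r := fun r hr hr0 => by
    have h2 : r ^ 2 ≤ 1 := by nlinarith [hr.1, hr.2]
    have h4 : 0 < r ^ 2 := by positivity
    refine ⟨Real.sqrt_pos.2 (by nlinarith), (Real.sqrt_lt' hr0).2 ?_⟩
    have : 0 < r ^ 4 := by positivity
    linarith
  have hGρ : ∀ r ∈ Set.Icc 0 R, 0 < r → G r = G (ρ r) := fun r hr hr0 => by
    obtain ⟨hρ0, hρr⟩ := hρlt r hr hr0
    have hρR : ρ r ∈ Set.Icc 0 R := ⟨hρ0.le, hρr.le.trans hr.2⟩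
    have hp0 := hpt r hr _ _ h10
    have hp1 := hpt r hr _ _ hc1
    have hp2 := hpt r hr _ _ hc2
    have hp4 := hpt r hr _ _ hc4
    have hrad : ∀ c s : ℝ, c ^ 2 + s ^ 2 = 1 → dist (φ (pt r c s)) (φ (b 0)) = G r :=
      fun c s hcs => hdist _ hp0 _ hoκ _ (hpt r hr c s hcs) _ hoκ (by
        rw [hpt_o r hr c s hcs, hpt_o r hr 1 0 h10])
    have hne : ∀ c s c' s' : ℝ, c ^ 2 + s ^ 2 = 1 → c' ^ 2 + s' ^ 2 = 1 →
        0 < (c - c') ^ 2 + (s - s') ^ 2 → φ (pt r c s) ≠ φ (pt r c' s') :=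
      fun c s c' s' hcs hcs' hpos he => by
        have := hinj (hκU (hpt r hr c s hcs)) (hκU (hpt r hr c' s' hcs')) he
        have h5 := hpt_pt r c s c' s'
        rw [this, dist_self] at h5
        exact (Real.sqrt_pos.2 (by positivity)).ne h5
    have hside := hexagon_side (hrad _ _ h10) (hrad _ _ hc2) (hrad _ _ hc4) (hrad _ _ hc1)
      (hdist _ hp2 _ hp4 _ hp0 _ hp2 (by
        rw [hpt_pt, hpt_pt]; congr 2; linear_combination -3 / 4 * h3))
      (hdist _ hp4 _ hp0 _ hp2 _ hp4 (by
        rw [hpt_pt, hpt_pt]; congr 2; linear_combination 3 / 4 * h3))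
      (hdist _ hp1 _ hp2 _ hp0 _ hp1 (by
        rw [hpt_pt, hpt_pt]; congr 2; linear_combination h3 / 4))
      (hne _ _ _ _ h10 hc2 (by nlinarith)) (hne _ _ _ _ hc1 hc4 (by nlinarith))
    rw [← hside]
    refine hdist _ (hpt _ hρR _ _ h10) _ hoκ _ hp0 _ hp1 ?_
    rw [hpt_pt, hpt_o _ hρR _ _ h10, ← Real.sqrt_sq hρ0.le]
    congr 1
    rw [Real.sqrt_sq hρ0.le]
    linear_combination ρ r ^ 2 * h3 / 4
  have hGcont : ContinuousOn G (Set.Icc 0 R) := by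
    refine continuous_dist.comp_continuousOn ((hφ.comp (Continuous.continuousOn ?_) fun r hr =>
      hκU (hpt r hr 1 0 h10)).prodMk continuousOn_const)
    exact (continuous_frame b).comp (f := fun r => (1 - r ^ 2 / 2, ρ r * 1, ρ r * 0)) (by fun_prop)
  have hcpt : IsCompact (Set.Icc 0 R ∩ G ⁻¹' {G R}) :=
    isCompact_Icc.of_isClosed_subset
      (hGcont.preimage_isClosed_of_isClosed isClosed_Icc isClosed_singleton) Set.inter_subset_left
  have hRmem : R ∈ Set.Icc 0 R := ⟨hR.le, le_rfl⟩
  obtain ⟨m, ⟨hmI, hmG⟩, hmin⟩ := hcpt.exists_isLeast ⟨R, hRmem, rfl⟩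
  have hm0 : 0 < m := by
    refine hmI.1.lt_of_ne ?_
    rintro rfl
    have h5 : pt 0 1 0 = b 0 := dist_eq_zero.1 (hpt_o 0 hmI 1 0 h10)
    have h6 : G R = 0 := by
      rw [← Set.mem_singleton_iff.1 hmG]
      simp only [G, h5, dist_self]
    have h7 := hinj (hκU (hpt R hRmem 1 0 h10)) (hκU hoκ) (dist_eq_zero.1 h6)
    have h8 := hpt_o R hRmem 1 0 h10
    rw [h7, dist_self] at h8
    exact hR.ne h8
  obtain ⟨hρ0, hρm⟩ := hρlt m hmI hm0
  refine hρm.not_ge (hmin ⟨⟨hρ0.le, hρm.le.trans hmI.2⟩, ?_⟩)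
  rw [Set.mem_preimage, ← hGρ m hmI hm0]
  exact hmG

end projection

/-- No map projection preserves the ordering of regions by Polsby-Popper score:
for every homeomorphism `φ` from a nonempty relatively open subset of the sphere onto an
open subset of the plane, there are regions `A ⊆ B` where `B` is strictly more compact
than `A` on the sphere, but `φ '' A` is at least as compact as `φ '' B` in the plane. -/
theorem no_projection_preserves_polsbyPopper_ordering
    (U : Set (EuclideanSpace ℝ (Fin 3))) (V : Set (EuclideanSpace ℝ (Fin 2)))
    (φ : EuclideanSpace ℝ (Fin 3) → EuclideanSpace ℝ (Fin 2))
    (ψ : EuclideanSpace ℝ (Fin 2) → EuclideanSpace ℝ (Fin 3))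
    (hUne : U.Nonempty)
    (hUopen : ∃ G : Set (EuclideanSpace ℝ (Fin 3)), IsOpen G ∧
      U = sphere (0 : EuclideanSpace ℝ (Fin 3)) 1 ∩ G)
    (hVopen : IsOpen V)
    (hφV : φ '' U = V) (hψU : ψ '' V = U)
    (hφcont : ContinuousOn φ U) (hψcont : ContinuousOn ψ V)
    (hψφ : ∀ p ∈ U, ψ (φ p) = p) (hφψ : ∀ q ∈ V, φ (ψ q) = q) :
    ∃ A B : Set (EuclideanSpace ℝ (Fin 3)),
      A.Nonempty ∧ B.Nonempty ∧
      (∃ G : Set (EuclideanSpace ℝ (Fin 3)), IsOpen G ∧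
        A = sphere (0 : EuclideanSpace ℝ (Fin 3)) 1 ∩ G) ∧
      (∃ G : Set (EuclideanSpace ℝ (Fin 3)), IsOpen G ∧
        B = sphere (0 : EuclideanSpace ℝ (Fin 3)) 1 ∩ G) ∧
      IsCompact (closure A) ∧ IsCompact (closure B) ∧
      closure A ⊆ U ∧ closure B ⊆ U ∧ A ⊆ B ∧
      ppSphere A < ppSphere B ∧ ppPlane (φ '' A) ≥ ppPlane (φ '' B) := by
  by_contra hcon
  subst hφV
  have hφ : IsMapProjection U φ ψ := ⟨hUopen, hVopen, hφcont, hψcont, hψφ⟩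
  have hord : OrderPreserving U φ := fun A B hA hB hAB hlt => by
    by_contra hle
    exact hcon ⟨A, B, hA.nonempty, hB.nonempty, hA.isOpen_rel, hB.isOpen_rel, hA.isCompact_closure,
      hB.isCompact_closure, hA.closure_subset, hB.closure_subset, hAB, hlt, not_lt.1 hle⟩
  obtain ⟨o, hoU⟩ := hUne
  obtain ⟨G, hG, hUG⟩ := hUopen
  have hoG : o ∈ sphere 0 1 ∩ G := hUG ▸ hoU
  have ho : ‖o‖ = 1 := by simpa using hoG.1
  obtain ⟨ε, hε, hεG⟩ := Metric.isOpen_iff.1 hG o hoG.2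
  obtain ⟨h₀, h0, hh₀, hε₀⟩ : ∃ h₀ : ℝ, 0 < h₀ ∧ h₀ < 1 ∧ 2 - 2 * h₀ < ε ^ 2 := by
    have := pow_pos hε 2
    refine ⟨max (1 / 2) (1 - ε ^ 2 / 4), lt_max_of_lt_left (by norm_num),
      max_lt (by norm_num) (by linarith), ?_⟩
    have := le_max_right (1 / 2) (1 - ε ^ 2 / 4)
    linarith
  obtain ⟨h₁, hh, h1⟩ := exists_between hh₀
  have hU : {x ∈ sphere 0 1 | h₀ ≤ inner ℝ o x} ⊆ U := by
    rintro x ⟨hx, hxo⟩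
    rw [hUG]
    refine ⟨hx, hεG ?_⟩
    rw [mem_sphere_zero_iff_norm] at hx
    rw [mem_ball, dist_comm, dist_eq_norm]
    refine lt_of_pow_lt_pow_left₀ 2 hε.le ?_
    rw [norm_sub_sq_real, ho, hx]
    linarith
  obtain ⟨κ, hκ, hκU, hdist⟩ := exists_forall_dist_image_eq hφ hord ho h0 hh h1 hU
  exact false_of_dist_image_eq ho hκ hκU hφcont hφ.injOn hdist
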